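/- arXiv:2212.08835 — 2 statements merged into one kernel-verified Lean document; each statement's English description precedes it below -/
import Mathlib

section
/- The space L(log L)²(-1,1) is contained in the range T(LlogL(-1,1)) of the finite Hilbert transform: for every g ∈ L(log L)²(-1,1) there exists f ∈ LlogL(-1,1) with T(f) = g almost everywhere. -/
open MeasureTheory Set Filter

noncomputable section

/-- Lebesgue measure restricted to the interval `(-1, 1)`. -/
def μI : Measure ℝ := volume.restrict (Set.Ioo (-1 : ℝ) 1)

/-- The finite Hilbert transform: the principal-value limit
`T(f)(t) = lim_{ε→0⁺} (1/π) ∫_{x∈(-1,1), |x-t|≥ε} f(x)/(x-t) dx`. -/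
def FHT (f : ℝ → ℂ) (t : ℝ) : ℂ :=
  limUnder (nhdsWithin (0 : ℝ) (Set.Ioi 0)) fun ε : ℝ =>
    (Real.pi : ℂ)⁻¹ *
      ∫ x in {x : ℝ | x ∈ Set.Ioo (-1 : ℝ) 1 ∧ ε ≤ |x - t|}, f x / ((x : ℂ) - (t : ℂ))

/-- The operator `T̂(g)(x) = -(1-x²)^{-1/2} T(t ↦ √(1-t²) g(t))(x)`. -/
def hatT (g : ℝ → ℂ) (x : ℝ) : ℂ :=
  -((Real.sqrt (1 - x ^ 2) : ℂ))⁻¹ * FHT (fun t => (Real.sqrt (1 - t ^ 2) : ℂ) * g t) x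

/-- Membership in the Zygmund space `L log L(-1,1)`:
`f` is a.e. measurable on `(-1,1)` and `∫ |f| log⁺|f| < ∞`. -/
def MemLlogL (f : ℝ → ℂ) : Prop :=
  AEStronglyMeasurable f μI ∧
    IntegrableOn (fun x => ‖f x‖ * max (Real.log ‖f x‖) 0) (Set.Ioo (-1 : ℝ) 1)

/-- The distribution function `λ ↦ |{x ∈ (-1,1) : |f(x)| > λ}|`. -/
def distFun (f : ℝ → ℂ) (lam : ℝ) : ℝ :=
  (volume {x : ℝ | x ∈ Set.Ioo (-1 : ℝ) 1 ∧ lam < ‖f x‖}).toReal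

/-- The decreasing rearrangement `f*` of `f`, a function on `(0,2)`. -/
def decRearr (f : ℝ → ℂ) (t : ℝ) : ℝ :=
  sInf {lam : ℝ | 0 ≤ lam ∧ distFun f lam ≤ t}

/-- The `L log L` norm `‖f‖ = ∫_0^2 f*(t) log(2e/t) dt`. -/
def llogLNorm (f : ℝ → ℂ) : ℝ :=
  ∫ t in Set.Ioo (0 : ℝ) 2, decRearr f t * Real.log (2 * Real.exp 1 / t)

/-- The `L(log L)^α` norm `∫_0^2 f*(t) log^α(2e/t) dt` (for `α = 0` this is the `L¹` norm). -/
def zygNorm (α : ℝ) (f : ℝ → ℂ) : ℝ :=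
  ∫ t in Set.Ioo (0 : ℝ) 2, decRearr f t * Real.log (2 * Real.exp 1 / t) ^ α

/-- Membership in the Zygmund space `L(log L)^α(-1,1)`. -/
def MemZyg (α : ℝ) (f : ℝ → ℂ) : Prop :=
  AEStronglyMeasurable f μI ∧
    IntegrableOn (fun t => decRearr f t * Real.log (2 * Real.exp 1 / t) ^ α)
      (Set.Ioo (0 : ℝ) 2)

/-- Membership in `L(log L)²(-1,1)`: `∫ |f| (log(2+|f|))² < ∞`. -/
def MemLlogL2 (f : ℝ → ℂ) : Prop :=
  AEStronglyMeasurable f μI ∧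
    IntegrableOn (fun x => ‖f x‖ * Real.log (2 + ‖f x‖) ^ 2) (Set.Ioo (-1 : ℝ) 1)

/-- The constant `c(β,γ) = max{1/(1-β), 1/(1-γ), 1/(β+γ-1)}`. -/
def cBG (β γ : ℝ) : ℝ := max (max (1 / (1 - β)) (1 / (1 - γ))) (1 / (β + γ - 1))

open scoped Topology ENNReal

def wt (x : ℝ) : ℝ := Real.sqrt (1 - x ^ 2)

/-- Cauchy integral over the interval. -/
def Cau (f : ℝ → ℝ) (z : ℂ) : ℂ := ∫ t, (f t : ℂ) / ((t : ℂ) - z) ∂μI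

instance finI : IsFiniteMeasure μI := by
  unfold μI; exact ⟨by simp⟩

lemma ae_I : ∀ᵐ t ∂μI, t ∈ Set.Ioo (-1 : ℝ) 1 := by
  unfold μI; exact ae_restrict_mem measurableSet_Ioo

lemma norm_sub_ge_im (t : ℝ) (z : ℂ) : |z.im| ≤ ‖(t : ℂ) - z‖ := by
  have := Complex.abs_im_le_norm ((t : ℂ) - z)
  simpa using this

lemma cau_ne (t : ℝ) {z : ℂ} (hz : 0 < z.im) : (t : ℂ) - z ≠ 0 := by
  intro h
  have := norm_sub_ge_im t z
  rw [h, norm_zero, abs_of_pos hz] at this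
  linarith

lemma cau_meas (z : ℂ) : Measurable (fun t : ℝ => ((t : ℂ) - z)⁻¹) := by
  fun_prop

lemma cau_int {f : ℝ → ℝ} (hf : Integrable f μI) {z : ℂ} (hz : 0 < z.im) :
    Integrable (fun t : ℝ => (f t : ℂ) / ((t : ℂ) - z)) μI := by
  simp_rw [div_eq_mul_inv]
  refine hf.ofReal.mul_bdd (c := z.im⁻¹) (cau_meas z).aestronglyMeasurable ?_
  filter_upwards with t
  rw [norm_inv]
  apply inv_anti₀ hz
  have := norm_sub_ge_im t z
  rwa [abs_of_pos hz] at this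

lemma cau_norm_le {f : ℝ → ℝ} (hf : Integrable f μI) {z : ℂ} {d : ℝ} (hd : 0 < d)
    (h : ∀ t ∈ Set.Ioo (-1 : ℝ) 1, d ≤ ‖(t : ℂ) - z‖) : ‖Cau f z‖ ≤ (∫ t, |f t| ∂μI) / d := by
  unfold Cau
  rw [← integral_div]
  apply norm_integral_le_of_norm_le (hf.abs.div_const d)
  filter_upwards [ae_I] with t ht
  rw [norm_div, Complex.norm_real, Real.norm_eq_abs]
  exact div_le_div_of_nonneg_left (abs_nonneg _) hd (h t ht)

lemma cau_norm_le_im {f : ℝ → ℝ} (hf : Integrable f μI) {z : ℂ} (hz : 0 < z.im) :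
    ‖Cau f z‖ ≤ (∫ t, |f t| ∂μI) / z.im :=
  cau_norm_le hf hz fun t _ => by have := norm_sub_ge_im t z; rwa [abs_of_pos hz] at this

lemma cau_add {f g : ℝ → ℝ} (hf : Integrable f μI) (hg : Integrable g μI) {z : ℂ}
    (hz : 0 < z.im) : Cau (fun t => f t + g t) z = Cau f z + Cau g z := by
  unfold Cau
  rw [← integral_add (cau_int hf hz) (cau_int hg hz)]
  congr 1; ext t; push_cast; ring

lemma cau_sub {f g : ℝ → ℝ} (hf : Integrable f μI) (hg : Integrable g μI) {z : ℂ}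
    (hz : 0 < z.im) : Cau (fun t => f t - g t) z = Cau f z - Cau g z := by
  unfold Cau
  rw [← integral_sub (cau_int hf hz) (cau_int hg hz)]
  congr 1; ext t; push_cast; ring

lemma cau_smul (c : ℝ) (f : ℝ → ℝ) (z : ℂ) : Cau (fun t => c * f t) z = c * Cau f z := by
  unfold Cau
  rw [← integral_const_mul]
  congr 1; ext t; push_cast; ring

lemma cau_congr {f g : ℝ → ℝ} (h : f =ᵐ[μI] g) (z : ℂ) : Cau f z = Cau g z := by
  unfold Cau
  apply integral_congr_ae
  filter_upwards [h] with t ht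
  rw [ht]

lemma cau_mul_id {f : ℝ → ℝ} (hf : Integrable f μI) {z : ℂ} (hz : 0 < z.im) :
    Cau (fun t => t * f t) z = z * Cau f z + ((∫ t, f t ∂μI : ℝ) : ℂ) := by
  unfold Cau
  have hf' : Integrable (fun t => (f t : ℂ)) μI := hf.ofReal
  rw [← integral_const_mul, ← integral_complex_ofReal,
    ← integral_add ((cau_int hf hz).const_mul z) hf']
  congr 1; ext t
  have := cau_ne t hz
  push_cast
  field_simp
  ring

lemma mul_id_int {f : ℝ → ℝ} (hf : Integrable f μI) : Integrable (fun t => t * f t) μI := by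
  refine hf.bdd_mul (c := 1) (by fun_prop) ?_
  filter_upwards [ae_I] with t ht
  rw [Real.norm_eq_abs, abs_le]
  exact ⟨ht.1.le, ht.2.le⟩

lemma cau_hasDerivAt {f : ℝ → ℝ} (hf : Integrable f μI) {z : ℂ} (hz : 0 < z.im) :
    DifferentiableAt ℂ (Cau f) z := by
  have hs : Metric.ball z (z.im / 2) ∈ 𝓝 z := Metric.ball_mem_nhds _ (by linarith)
  have him : ∀ w ∈ Metric.ball z (z.im / 2), z.im / 2 ≤ w.im := by
    intro w hw
    rw [Metric.mem_ball, dist_eq_norm] at hw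
    have := Complex.abs_im_le_norm (w - z)
    rw [Complex.sub_im] at this
    have := abs_le.1 (this.trans hw.le)
    linarith [this.1]
  refine (hasDerivAt_integral_of_dominated_loc_of_deriv_le (μ := μI) (𝕜 := ℂ)
    (F := fun w t => (f t : ℂ) / ((t : ℂ) - w)) (F' := fun w t => (f t : ℂ) / ((t : ℂ) - w) ^ 2)
    (bound := fun t => |f t| * ((z.im / 2) ^ 2)⁻¹)
    hs ?_ (cau_int hf hz) ?_ ?_ (hf.abs.mul_const _) ?_).2.differentiableAt
  · filter_upwards [hs] with w hw
    exact (cau_int hf (by linarith [him w hw])).aestronglyMeasurable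
  · simp_rw [div_eq_mul_inv]
    exact hf.ofReal.aestronglyMeasurable.mul (by fun_prop)
  · filter_upwards with t w hw
    rw [norm_div, Complex.norm_real, Real.norm_eq_abs, div_eq_mul_inv, norm_pow]
    gcongr
    have := norm_sub_ge_im t w
    exact ((him w hw).trans (le_abs_self _)).trans this
  · filter_upwards with t w hw
    have h0 := cau_ne t (z := w) (by linarith [him w hw])
    have h1 : HasDerivAt (fun w : ℂ => (t : ℂ) - w) (-1) w := by
      simpa using (hasDerivAt_id w).const_sub (t : ℂ)
    have := (hasDerivAt_const w (f t : ℂ)).div h1 h0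
    simp only [zero_mul, mul_neg, mul_one, sub_neg_eq_add, zero_add] at this
    exact this

lemma den_pos (s : ℝ) {y : ℝ} (hy : 0 < y) : 0 < s ^ 2 + y ^ 2 := by positivity

lemma cau_re {f : ℝ → ℝ} (hf : Integrable f μI) (x : ℝ) {y : ℝ} (hy : 0 < y) :
    (Cau f (x + y * Complex.I)).re = ∫ t, f t * ((t - x) / ((t - x) ^ 2 + y ^ 2)) ∂μI := by
  unfold Cau
  have := integral_re (cau_int hf (z := x + y * Complex.I) (by simpa using hy))
  simp only [RCLike.re_to_complex] at this
  rw [← this]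
  congr 1; ext t
  have := den_pos (t - x) hy
  rw [div_eq_mul_inv, Complex.re_ofReal_mul, Complex.inv_re]
  simp [Complex.normSq_apply]
  left
  ring_nf

lemma cau_im {f : ℝ → ℝ} (hf : Integrable f μI) (x : ℝ) {y : ℝ} (hy : 0 < y) :
    (Cau f (x + y * Complex.I)).im = ∫ t, f t * (y / ((t - x) ^ 2 + y ^ 2)) ∂μI := by
  unfold Cau
  have := integral_im (cau_int hf (z := x + y * Complex.I) (by simpa using hy))
  simp only [RCLike.im_to_complex] at this
  rw [← this]
  congr 1; ext t
  have := den_pos (t - x) hy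
  rw [div_eq_mul_inv, Complex.im_ofReal_mul, Complex.inv_im]
  simp [Complex.normSq_apply]
  left
  ring_nf

lemma zim {x y : ℝ} : ((x : ℂ) + y * Complex.I).im = y := by simp
lemma zre {x y : ℝ} : ((x : ℂ) + y * Complex.I).re = x := by simp

/-- `y * C f (x+iy) → 0`. -/
lemma cau_small {f : ℝ → ℝ} (hf : Integrable f μI) (x : ℝ) :
    Tendsto (fun y : ℝ => (y : ℂ) * Cau f (x + y * Complex.I)) (𝓝[>] 0) (𝓝 0) := by
  unfold Cau
  simp_rw [← integral_const_mul]
  rw [← integral_zero ℝ ℂ (μ := μI)]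
  apply tendsto_integral_filter_of_dominated_convergence (fun t => |f t|)
  · filter_upwards [self_mem_nhdsWithin] with y hy
    exact ((cau_int hf (by simpa using hy)).const_mul _).aestronglyMeasurable
  · filter_upwards [self_mem_nhdsWithin] with y hy
    filter_upwards with t
    have hy' : 0 < y := hy
    have h := norm_sub_ge_im t (x + y * Complex.I)
    rw [zim] at h
    have h0 : 0 < ‖(t : ℂ) - (x + y * Complex.I)‖ := lt_of_lt_of_le (abs_pos.2 hy'.ne') h
    rw [norm_mul, norm_div, Complex.norm_real, Complex.norm_real, Real.norm_eq_abs,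
      Real.norm_eq_abs, mul_div_assoc', div_le_iff₀ h0, mul_comm]
    gcongr
  · exact hf.abs
  · have : ∀ᵐ t ∂μI, t ≠ x := by
      unfold μI
      apply ae_restrict_of_ae
      simp [ae_iff, measure_singleton]
    filter_upwards [this] with t ht
    have hc : ContinuousAt (fun y : ℝ => (y : ℂ) * ((f t : ℂ) / ((t : ℂ) - (x + y * Complex.I)))) 0 := by
      have : (t : ℂ) - (x + ((0:ℝ):ℂ) * Complex.I) ≠ 0 := by
        simp only [Complex.ofReal_zero, zero_mul, add_zero]
        rw [← Complex.ofReal_sub]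
        exact_mod_cast sub_ne_zero.2 ht
      fun_prop (disch := assumption)
    have := hc.tendsto
    simp only [Complex.ofReal_zero, zero_mul] at this
    exact this.mono_left nhdsWithin_le_nhds

/-- `iy * C f (iy) → -∫ f`. -/
lemma cau_inf {f : ℝ → ℝ} (hf : Integrable f μI) :
    Tendsto (fun y : ℝ => ((y : ℂ) * Complex.I) * Cau f (y * Complex.I)) atTop
      (𝓝 (-((∫ t, f t ∂μI : ℝ) : ℂ))) := by
  unfold Cau
  simp_rw [← integral_const_mul]
  rw [← integral_complex_ofReal, ← integral_neg]
  apply tendsto_integral_filter_of_dominated_convergence (fun t => |f t|)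
  · filter_upwards [eventually_gt_atTop 0] with y hy
    exact ((cau_int hf (by simpa using hy)).const_mul _).aestronglyMeasurable
  · filter_upwards [eventually_gt_atTop 0] with y hy
    filter_upwards with t
    have h := norm_sub_ge_im t (y * Complex.I)
    have e : ((y : ℂ) * Complex.I).im = y := by simp
    rw [e] at h
    have h0 : 0 < ‖(t : ℂ) - (y * Complex.I)‖ := lt_of_lt_of_le (abs_pos.2 hy.ne') h
    rw [norm_mul, norm_div, Complex.norm_real, norm_mul, Complex.norm_real, Complex.norm_I,
      Real.norm_eq_abs, mul_one,
      Real.norm_eq_abs, mul_div_assoc', div_le_iff₀ h0, mul_comm]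
    gcongr
  · exact hf.abs
  · filter_upwards with t
    have h1 : Tendsto (fun y : ℝ => (t : ℂ) / (y * Complex.I)) atTop (𝓝 0) := by
      rw [tendsto_zero_iff_norm_tendsto_zero]
      simp only [norm_div, norm_mul, Complex.norm_I, mul_one, Complex.norm_real]
      exact tendsto_const_nhds.div_atTop (tendsto_norm_atTop_atTop)
    have h2 : Tendsto (fun y : ℝ => (f t : ℂ) / ((t : ℂ) / (y * Complex.I) - 1)) atTop
        (𝓝 ((f t : ℂ) / (0 - 1))) := by
      apply Tendsto.div tendsto_const_nhds (h1.sub tendsto_const_nhds)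
      norm_num
    have e : (f t : ℂ) / (0 - 1) = -(f t : ℂ) := by ring
    rw [e] at h2
    apply h2.congr'
    filter_upwards [eventually_gt_atTop 0] with y hy
    have h3 := cau_ne t (z := y * Complex.I) (by simpa using hy)
    have h4 : (y : ℂ) ≠ 0 := by exact_mod_cast hy.ne'
    have h5 : (t : ℂ) / (y * Complex.I) - 1 = ((t : ℂ) - y * Complex.I) / (y * Complex.I) := by
      field_simp
    rw [h5]
    field_simp

lemma wt_pos {x : ℝ} (hx : x ∈ Set.Ioo (-1 : ℝ) 1) : 0 < wt x := by
  apply Real.sqrt_pos.2; nlinarith [hx.1, hx.2]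

lemma wt_nonneg (x : ℝ) : 0 ≤ wt x := Real.sqrt_nonneg _

lemma wt_sq {x : ℝ} (hx : x ∈ Set.Ioo (-1 : ℝ) 1) : wt x ^ 2 = 1 - x ^ 2 := by
  apply Real.sq_sqrt; nlinarith [hx.1, hx.2]

lemma wt_le_one (x : ℝ) : wt x ≤ 1 := by
  apply Real.sqrt_le_one.2; nlinarith [sq_nonneg x]

lemma wt_cont : Continuous wt := by unfold wt; fun_prop

lemma wt_meas : Measurable wt := wt_cont.measurable

lemma cos_image : Real.cos '' Set.Ioo 0 Real.pi = Set.Ioo (-1 : ℝ) 1 := by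
  ext x
  constructor
  · rintro ⟨θ, hθ, rfl⟩
    constructor
    · rw [← Real.cos_pi]
      exact Real.strictAntiOn_cos ⟨hθ.1.le, hθ.2.le⟩ ⟨Real.pi_pos.le, le_rfl⟩ hθ.2
    · rw [← Real.cos_zero]
      exact Real.strictAntiOn_cos ⟨le_rfl, Real.pi_pos.le⟩ ⟨hθ.1.le, hθ.2.le⟩ hθ.1
  · intro hx
    refine ⟨Real.arccos x, ⟨Real.arccos_pos.2 hx.2, ?_⟩, Real.cos_arccos hx.1.le hx.2.le⟩
    exact lt_of_le_of_ne (Real.arccos_le_pi x) fun h => by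
      rw [Real.arccos_eq_pi] at h; linarith [hx.1]

lemma cos_injOn : InjOn Real.cos (Set.Ioo 0 Real.pi) :=
  Real.injOn_cos.mono Ioo_subset_Icc_self

lemma sin_inv_aux {θ : ℝ} (hθ : θ ∈ Set.Ioo 0 Real.pi) :
    |-Real.sin θ| * (wt (Real.cos θ))⁻¹ = 1 := by
  have h := Real.sin_pos_of_mem_Ioo hθ
  have : wt (Real.cos θ) = Real.sin θ := by
    unfold wt
    rw [← Real.sin_sq, Real.sqrt_sq h.le]
  rw [this, abs_neg, abs_of_pos h, mul_inv_cancel₀ h.ne']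

lemma cos_subst {E : Type*} [NormedAddCommGroup E] [NormedSpace ℝ E] (φ : ℝ → E) :
    ∫ t, (wt t)⁻¹ • φ t ∂μI = ∫ θ in (0 : ℝ)..Real.pi, φ (Real.cos θ) := by
  unfold μI
  rw [← cos_image, integral_image_eq_integral_abs_deriv_smul measurableSet_Ioo
    (fun x _ => (Real.hasDerivAt_cos x).hasDerivWithinAt) cos_injOn,
    intervalIntegral.integral_of_le Real.pi_pos.le, integral_Ioc_eq_integral_Ioo]
  apply setIntegral_congr_fun measurableSet_Ioo
  intro θ hθ
  simp only
  rw [smul_smul, sin_inv_aux hθ, one_smul]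

lemma wt_inv_int : Integrable (fun t => (wt t)⁻¹) μI := by
  unfold μI
  have : IntegrableOn (fun t => (wt t)⁻¹) (Real.cos '' Set.Ioo 0 Real.pi) := by
    rw [integrableOn_image_iff_integrableOn_abs_deriv_smul measurableSet_Ioo
      (fun x _ => (Real.hasDerivAt_cos x).hasDerivWithinAt) cos_injOn]
    have h1 : IntegrableOn (fun _ : ℝ => (1 : ℝ)) (Set.Ioo 0 Real.pi) := by
      apply integrableOn_const <;> simp
    refine h1.congr_fun ?_ measurableSet_Ioo
    intro θ hθ
    simp only [smul_eq_mul]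
    rw [sin_inv_aux hθ]
  rwa [cos_image] at this

def Sf (z : ℂ) : ℂ := Cau (fun t => (wt t)⁻¹) z

lemma Sf_eq (z : ℂ) : Sf z = ∫ θ in (0 : ℝ)..Real.pi, ((Real.cos θ : ℂ) - z)⁻¹ := by
  rw [← cos_subst (fun t : ℝ => ((t : ℂ) - z)⁻¹)]
  unfold Sf Cau
  congr 1

lemma int_wt_inv : ∫ t, (wt t)⁻¹ ∂μI = Real.pi := by
  have := cos_subst (fun _ : ℝ => (1 : ℝ))
  simpa using this

lemma int_id_wt_inv : ∫ t, t * (wt t)⁻¹ ∂μI = 0 := by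
  have := cos_subst (fun t : ℝ => t)
  simp only [integral_cos, Real.sin_pi, Real.sin_zero, sub_zero, smul_eq_mul] at this
  rw [← this]
  congr 1; ext t; ring

lemma roots_aux {z : ℂ} (hz : 0 < z.im) :
    ∃ a b : ℂ, a + b = 2 * z ∧ a * b = 1 ∧ ‖a‖ < 1 ∧ 1 < ‖b‖ := by
  obtain ⟨s, hs⟩ := IsAlgClosed.exists_pow_nat_eq (z ^ 2 - 1) (n := 2) (by norm_num)
  have key : ∀ a b : ℂ, a + b = 2 * z → a * b = 1 → ‖a‖ ≠ 1 := by
    intro a b h1 h2 h3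
    have ha : a ≠ 0 := by rintro rfl; simp at h2
    have hb : b = (starRingEnd ℂ) a := by
      have h4 : a * (starRingEnd ℂ) a = 1 := by
        rw [Complex.mul_conj, Complex.normSq_eq_norm_sq, h3]; simp
      exact mul_left_cancel₀ ha (h2.trans h4.symm)
    have := congrArg Complex.im h1
    rw [hb] at this
    simp at this
    linarith
  have e1 : (z + s) + (z - s) = 2 * z := by ring
  have e2 : (z + s) * (z - s) = 1 := by linear_combination -hs
  have hn : ‖z + s‖ * ‖z - s‖ = 1 := by rw [← norm_mul, e2, norm_one]
  have h1 := key _ _ e1 e2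
  have hp1 : 0 < ‖z + s‖ := norm_pos_iff.2 (by intro h; rw [h] at e2; simp at e2)
  have hp2 : 0 < ‖z - s‖ := norm_pos_iff.2 (by intro h; rw [h] at e2; simp at e2)
  rcases lt_or_gt_of_ne h1 with h | h
  · exact ⟨_, _, e1, e2, h, by nlinarith⟩
  · exact ⟨z - s, z + s, by rw [add_comm, e1], by rw [mul_comm, e2], by nlinarith, h⟩

lemma Sf_sq {z : ℂ} (hz : 0 < z.im) : Sf z ^ 2 * (z ^ 2 - 1) = (Real.pi : ℂ) ^ 2 := by
  obtain ⟨a, b, hab, hab', ha, hb⟩ := roots_aux hz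
  have hne : a - b ≠ 0 := by
    intro h
    have : a = b := sub_eq_zero.1 h
    rw [this] at ha; linarith
  have hne1 : ∀ ζ ∈ Metric.closedBall (0 : ℂ) 1, ζ - b ≠ 0 := by
    intro ζ hζ h
    rw [sub_eq_zero.1 h] at hζ
    simp at hζ; linarith
  have hA : CircleIntegrable (fun ζ : ℂ => (ζ - a)⁻¹) 0 1 := by
    apply ContinuousOn.circleIntegrable zero_le_one
    intro ζ hζ
    have : ζ - a ≠ 0 := by
      intro h
      rw [sub_eq_zero.1 h] at hζ
      simp at hζ; linarith
    apply ContinuousAt.continuousWithinAt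
    fun_prop (disch := assumption)
  have hBc : ContinuousOn (fun ζ : ℂ => (ζ - b)⁻¹) (Metric.closedBall 0 1) := by
    intro ζ hζ
    have := hne1 ζ hζ
    apply ContinuousAt.continuousWithinAt
    fun_prop (disch := assumption)
  have hB : CircleIntegrable (fun ζ : ℂ => (ζ - b)⁻¹) 0 1 :=
    (hBc.mono Metric.sphere_subset_closedBall).circleIntegrable zero_le_one
  have hB0 : circleIntegral (fun ζ : ℂ => (ζ - b)⁻¹) 0 1 = 0 := by
    apply Complex.circleIntegral_eq_zero_of_differentiable_on_off_countable zero_le_one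
      countable_empty hBc
    intro ζ hζ
    have := hne1 ζ (Metric.ball_subset_closedBall hζ.1)
    fun_prop (disch := assumption)
  have hA0 : circleIntegral (fun ζ : ℂ => (ζ - a)⁻¹) 0 1 = 2 * Real.pi * Complex.I :=
    circleIntegral.integral_sub_inv_of_mem_ball (by simpa using ha)
  have hD := circleIntegral.integral_sub hA hB
  rw [hA0, hB0, sub_zero] at hD
  -- relate with the cosine integral
  have hcos : ∀ θ : ℝ, deriv (circleMap 0 1) θ •
      ((circleMap 0 1 θ - a)⁻¹ - (circleMap 0 1 θ - b)⁻¹) =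
      ((a - b) * Complex.I / 2) * ((Real.cos θ : ℂ) - z)⁻¹ := by
    intro θ
    rw [deriv_circleMap, smul_eq_mul]
    set ζ := circleMap 0 1 θ with hζ
    have hζn : ‖ζ‖ = 1 := by simp [hζ]
    have hζ0 : ζ ≠ 0 := by intro h; rw [h] at hζn; simp at hζn
    have h1 : ζ - a ≠ 0 := by
      intro h; rw [sub_eq_zero.1 h] at hζn; linarith
    have h2 : ζ - b ≠ 0 := by
      intro h; rw [sub_eq_zero.1 h] at hζn; linarith
    have hc : 2 * (Real.cos θ : ℂ) = ζ + ζ⁻¹ := by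
      rw [hζ, circleMap]
      simp only [zero_add, Complex.ofReal_one, one_mul]
      rw [← Complex.exp_neg, Complex.ofReal_cos, Complex.two_cos]
      congr 2; ring
    have h3 : ((Real.cos θ : ℂ) - z) = (ζ - a) * (ζ - b) / (2 * ζ) := by
      have : (Real.cos θ : ℂ) = (ζ + ζ⁻¹) / 2 := by rw [← hc]; ring
      rw [this]
      field_simp
      linear_combination -hab' + ζ * hab
    rw [h3]
    field_simp
    ring
  have hper : ∫ θ in (0 : ℝ)..(2 * Real.pi), ((Real.cos θ : ℂ) - z)⁻¹ = 2 * Sf z := by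
    have hc : Continuous (fun θ : ℝ => ((Real.cos θ : ℂ) - z)⁻¹) := by
      apply Continuous.inv₀
      · fun_prop
      · intro θ; exact cau_ne _ hz
    rw [← intervalIntegral.integral_add_adjacent_intervals (b := Real.pi)
      (hc.intervalIntegrable _ _) (hc.intervalIntegrable _ _), Sf_eq]
    have := intervalIntegral.integral_comp_sub_left (a := 0) (b := Real.pi)
      (fun θ : ℝ => ((Real.cos θ : ℂ) - z)⁻¹) (2 * Real.pi)
    simp only [Real.cos_two_pi_sub, sub_zero] at this
    rw [show 2 * Real.pi - Real.pi = Real.pi by ring] at this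
    rw [← this, ← two_mul]
  rw [circleIntegral] at hD
  simp_rw [hcos] at hD
  rw [intervalIntegral.integral_const_mul, hper] at hD
  have h5 : Sf z * (a - b) = 2 * Real.pi := by
    apply mul_right_cancel₀ Complex.I_ne_zero
    linear_combination hD
  have h6 : z ^ 2 - 1 = (a - b) ^ 2 / 4 := by
    have : z = (a + b) / 2 := by rw [hab]; ring
    rw [this]; linear_combination hab'
  rw [h6]
  linear_combination (Sf z * (a - b) + 2 * Real.pi) / 4 * h5

def HRel (f g : ℝ → ℝ) : Prop := ∀ z : ℂ, 0 < z.im →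
  Cau f z = -(Real.pi : ℂ)⁻¹ * Sf z * Cau (fun t => wt t * g t) z

lemma wt_mul_int {g : ℝ → ℝ} (hg : Integrable g μI) : Integrable (fun t => wt t * g t) μI := by
  refine hg.bdd_mul (c := 1) wt_meas.aestronglyMeasurable ?_
  filter_upwards with t
  rw [Real.norm_eq_abs, abs_of_nonneg (wt_nonneg t)]
  exact wt_le_one t

lemma rel_int_zero {f g : ℝ → ℝ} (hf : Integrable f μI) (hg : Integrable g μI)
    (h : HRel f g) : ∫ t, f t ∂μI = 0 := by
  have h1 := cau_inf hf
  have h2 := cau_inf wt_inv_int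
  have h3 : Tendsto (fun y : ℝ => Cau (fun t => wt t * g t) (y * Complex.I)) atTop (𝓝 0) := by
    rw [tendsto_zero_iff_norm_tendsto_zero]
    have h4 : Tendsto (fun y : ℝ => (∫ t, |wt t * g t| ∂μI) / y) atTop (𝓝 0) :=
      tendsto_const_nhds.div_atTop tendsto_id
    refine tendsto_of_tendsto_of_tendsto_of_le_of_le' tendsto_const_nhds h4
      (Eventually.of_forall fun _ => norm_nonneg _) ?_
    filter_upwards [eventually_gt_atTop 0] with y hy
    have := cau_norm_le_im (wt_mul_int hg) (z := y * Complex.I) (by simpa using hy)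
    simpa using this
  have h5 := (h2.mul h3).const_mul (-(Real.pi : ℂ)⁻¹)
  simp only [mul_zero] at h5
  have h6 := tendsto_nhds_unique h1 (h5.congr' (by
    filter_upwards [eventually_gt_atTop 0] with y hy
    rw [h _ (by simpa using hy)]
    unfold Sf
    ring))
  have : ((∫ t, f t ∂μI : ℝ) : ℂ) = 0 := by rw [← neg_eq_zero]; exact h6
  exact_mod_cast this

lemma rel_add {f g f' g' : ℝ → ℝ} (hf : Integrable f μI) (hg : Integrable g μI)
    (hf' : Integrable f' μI) (hg' : Integrable g' μI) (h : HRel f g) (h' : HRel f' g') :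
    HRel (fun t => f t + f' t) (fun t => g t + g' t) := by
  intro z hz
  have : (fun t => wt t * (g t + g' t)) = fun t => wt t * g t + wt t * g' t := by
    ext t; ring
  rw [cau_add hf hf' hz, h z hz, h' z hz, this, cau_add (wt_mul_int hg) (wt_mul_int hg') hz]
  ring

lemma rel_smul (c : ℝ) {f g : ℝ → ℝ} (h : HRel f g) :
    HRel (fun t => c * f t) (fun t => c * g t) := by
  intro z hz
  have : (fun t => wt t * (c * g t)) = fun t => c * (wt t * g t) := by
    ext t; ring
  rw [cau_smul, h z hz, this, cau_smul]
  ring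

lemma rel_sub {f g f' g' : ℝ → ℝ} (hf : Integrable f μI) (hg : Integrable g μI)
    (hf' : Integrable f' μI) (hg' : Integrable g' μI) (h : HRel f g) (h' : HRel f' g') :
    HRel (fun t => f t - f' t) (fun t => g t - g' t) := by
  have := rel_add hf hg (hf'.const_mul (-1)) (hg'.const_mul (-1)) h (rel_smul (-1) h')
  simpa [sub_eq_add_neg] using this

lemma wt_id {t : ℝ} (ht : t ∈ Set.Ioo (-1 : ℝ) 1) :
    wt t * 1 = (wt t)⁻¹ - t * (t * (wt t)⁻¹) := by
  have h := wt_pos ht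
  have h2 := wt_sq ht
  field_simp
  rw [h2]

lemma pow_int (n : ℕ) : Integrable (fun t : ℝ => t ^ n) μI := by
  unfold μI
  exact ((continuous_pow n).integrableOn_Icc (a := (-1 : ℝ)) (b := 1)).mono_set
    Ioo_subset_Icc_self

lemma rel_pow (n : ℕ) : ∃ f, Integrable f μI ∧ HRel f (fun t => t ^ n) := by
  induction n with
  | zero =>
    refine ⟨fun t => t * (wt t)⁻¹, mul_id_int wt_inv_int, ?_⟩
    intro z hz
    have hw : Cau (fun t => wt t * t ^ 0) z = Sf z - (z * (z * Sf z + Real.pi) + 0) := by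
      rw [cau_congr (g := fun t => (wt t)⁻¹ - t * (t * (wt t)⁻¹)),
        cau_sub wt_inv_int (mul_id_int (mul_id_int wt_inv_int)) hz,
        cau_mul_id (mul_id_int wt_inv_int) hz, cau_mul_id wt_inv_int hz, int_id_wt_inv, int_wt_inv]
      · simp [Sf]
      · filter_upwards [ae_I] with t ht
        rw [← wt_id ht, pow_zero]
    rw [hw, cau_mul_id wt_inv_int hz, int_wt_inv]
    have hpi : (Real.pi : ℂ) ≠ 0 := by exact_mod_cast Real.pi_ne_zero
    have := Sf_sq hz
    change z * Sf z + _ = _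
    field_simp
    linear_combination -this
  | succ n ih =>
    obtain ⟨f, hf, h⟩ := ih
    have h0 := rel_int_zero hf (pow_int n) h
    refine ⟨fun t => t * f t - (Real.pi⁻¹ * ∫ t, wt t * t ^ n ∂μI) * (wt t)⁻¹,
      (mul_id_int hf).sub (wt_inv_int.const_mul _), ?_⟩
    intro z hz
    have e : (fun t => wt t * t ^ (n + 1)) = fun t => t * (wt t * t ^ n) := by
      ext t; ring
    rw [e, cau_sub (mul_id_int hf) (wt_inv_int.const_mul _) hz, cau_smul,
      cau_mul_id hf hz, cau_mul_id (wt_mul_int (pow_int n)) hz, h0, h z hz]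
    change _ - _ * Sf z = _
    push_cast
    ring

lemma poly_int (p : Polynomial ℝ) : Integrable (fun t => p.eval t) μI := by
  unfold μI
  exact (p.continuous.integrableOn_Icc (a := (-1 : ℝ)) (b := 1)).mono_set
    Ioo_subset_Icc_self

lemma rel_poly (p : Polynomial ℝ) : ∃ f, Integrable f μI ∧ HRel f (fun t => p.eval t) := by
  induction p using Polynomial.induction_on' with
  | add p q hp hq =>
    obtain ⟨f, hf, h⟩ := hp
    obtain ⟨f', hf', h'⟩ := hq
    refine ⟨fun t => f t + f' t, hf.add hf', ?_⟩
    have := rel_add hf (poly_int p) hf' (poly_int q) h h'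
    simpa only [Polynomial.eval_add] using this
  | monomial n a =>
    obtain ⟨f, hf, h⟩ := rel_pow n
    refine ⟨_, hf.const_mul a, ?_⟩
    have := rel_smul a h
    simpa using this

def pk (y s : ℝ) : ℝ := y / (s ^ 2 + y ^ 2)

lemma pk_nonneg {y : ℝ} (hy : 0 < y) (s : ℝ) : 0 ≤ pk y s := by unfold pk; positivity

lemma pk_meas (y : ℝ) : Measurable (pk y) := by unfold pk; fun_prop

lemma pk_le {y : ℝ} (hy : 0 < y) (s : ℝ) : pk y s ≤ y⁻¹ := by
  unfold pk
  rw [div_le_iff₀ (by positivity)]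
  have : y⁻¹ * (s ^ 2 + y ^ 2) = y⁻¹ * s ^ 2 + y := by field_simp
  rw [this]
  have : 0 ≤ y⁻¹ * s ^ 2 := by positivity
  linarith

lemma pk_eq {y : ℝ} (hy : 0 < y) (s : ℝ) : pk y s = y⁻¹ * (1 + (s / y) ^ 2)⁻¹ := by
  unfold pk; field_simp; ring_nf

lemma pk_int {y : ℝ} (hy : 0 < y) : Integrable (pk y) := by
  have : pk y = fun s => y⁻¹ * (1 + (s / y) ^ 2)⁻¹ := by ext s; exact pk_eq hy s
  rw [this]
  exact (integrable_inv_one_add_sq.comp_div hy.ne').const_mul _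

lemma pk_integral {y : ℝ} (hy : 0 < y) : ∫ s, pk y s = Real.pi := by
  have : pk y = fun s => y⁻¹ * (1 + (s / y) ^ 2)⁻¹ := by ext s; exact pk_eq hy s
  rw [this, integral_const_mul, Measure.integral_comp_div (fun s : ℝ => (1 + s ^ 2)⁻¹),
    integral_univ_inv_one_add_sq, abs_of_pos hy, smul_eq_mul]
  field_simp

lemma pk_dyadic {y : ℝ} (hy : 0 < y) (s : ℝ) :
    ∃ k : ℕ, |s| ≤ 2 ^ k * y ∧ pk y s ≤ 4 / (4 ^ k * y) := by
  rcases le_or_gt |s| y with h | h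
  · refine ⟨0, by simpa using h, (pk_le hy s).trans ?_⟩
    rw [pow_zero, one_mul, ← one_div]
    gcongr; norm_num
  · obtain ⟨k, hk1, hk2⟩ := exists_nat_pow_near (x := |s| / y) (y := (2 : ℝ))
      (by rw [le_div_iff₀ hy]; linarith) (by norm_num)
    refine ⟨k + 1, ?_, ?_⟩
    · rw [div_lt_iff₀ hy] at hk2; exact hk2.le
    · rw [le_div_iff₀ hy] at hk1
      unfold pk
      rw [div_le_div_iff₀ (by positivity) (by positivity)]
      have h1 : (2 ^ k * y) ^ 2 ≤ s ^ 2 := by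
        rw [← sq_abs s]; gcongr
      have h2 : ((2 : ℝ) ^ k) ^ 2 = 4 ^ k := by rw [← pow_mul, mul_comm, pow_mul]; norm_num
      rw [mul_pow, h2] at h1
      rw [pow_succ]
      nlinarith [sq_nonneg y]

lemma poisson_bound {F : ℝ → ℝ} (hF : ∀ t, 0 ≤ F t) (hFm : AEMeasurable F) (x : ℝ)
    (hloc : ∀ r, IntegrableOn F (Metric.closedBall x r))
    {y : ℝ} (hy : 0 < y)
    (hs : Summable fun k : ℕ => 4 / (4 ^ k * y) * ∫ t in Metric.closedBall x (2 ^ k * y), F t) :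
    ∫ t, F t * pk y (t - x) ≤
      ∑' k : ℕ, 4 / (4 ^ k * y) * ∫ t in Metric.closedBall x (2 ^ k * y), F t := by
  have hterm : ∀ k : ℕ, 0 ≤ 4 / (4 ^ k * y) * ∫ t in Metric.closedBall x (2 ^ k * y), F t :=
    fun k => mul_nonneg (by positivity) (integral_nonneg hF)
  have hnn : ∀ t, 0 ≤ F t * pk y (t - x) := fun t => mul_nonneg (hF t) (pk_nonneg hy _)
  rw [integral_eq_lintegral_of_nonneg_ae (Eventually.of_forall hnn)
    (hFm.mul ((pk_meas y).comp (measurable_id.sub_const x)).aemeasurable).aestronglyMeasurable]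
  apply ENNReal.toReal_le_of_le_ofReal (tsum_nonneg hterm)
  rw [ENNReal.ofReal_tsum_of_nonneg hterm hs]
  calc ∫⁻ t, ENNReal.ofReal (F t * pk y (t - x))
      ≤ ∫⁻ t, ∑' k : ℕ, ENNReal.ofReal (4 / (4 ^ k * y)) *
        (Metric.closedBall x (2 ^ k * y)).indicator (fun t => ENNReal.ofReal (F t)) t := by
        apply lintegral_mono
        intro t
        obtain ⟨k, hk1, hk2⟩ := pk_dyadic hy (t - x)
        refine le_trans ?_ (ENNReal.le_tsum k)
        have : t ∈ Metric.closedBall x (2 ^ k * y) := by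
          rw [Metric.mem_closedBall, Real.dist_eq]; exact hk1
        rw [indicator_of_mem this, ← ENNReal.ofReal_mul (by positivity)]
        apply ENNReal.ofReal_le_ofReal
        rw [mul_comm]
        gcongr
        exact hF t
    _ = ∑' k : ℕ, ENNReal.ofReal
        (4 / (4 ^ k * y) * ∫ t in Metric.closedBall x (2 ^ k * y), F t) := by
        rw [lintegral_tsum]
        · congr 1; ext k
          rw [lintegral_const_mul'' _ (hFm.ennreal_ofReal.indicator Metric.isClosed_closedBall.measurableSet),
            lintegral_indicator Metric.isClosed_closedBall.measurableSet,
            ENNReal.ofReal_mul (by positivity),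
            ofReal_integral_eq_lintegral_ofReal (hloc _) (Eventually.of_forall hF)]
        · intro k
          exact (hFm.ennreal_ofReal.indicator Metric.isClosed_closedBall.measurableSet).const_mul _

lemma poisson_ae {f : ℝ → ℝ} (hf : Integrable f) : ∀ᵐ x, Tendsto
    (fun y : ℝ => ∫ t, |f t - f x| * pk y (t - x)) (𝓝[>] 0) (𝓝 0) := by
  filter_upwards [IsUnifLocDoublingMeasure.ae_tendsto_average_norm_sub volume
    hf.locallyIntegrable 1] with x hx
  have hA0 := hx (l := 𝓝[>] (0 : ℝ)) (fun _ => x) id tendsto_id (by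
    filter_upwards [self_mem_nhdsWithin] with r hr
    simp only [id, one_mul]
    exact Metric.mem_closedBall_self (le_of_lt hr))
  set F : ℝ → ℝ := fun t => |f t - f x| with hFdef
  have hF : ∀ t, 0 ≤ F t := fun t => abs_nonneg _
  have hloc : ∀ r, IntegrableOn F (Metric.closedBall x r) := by
    intro r
    refine (Integrable.sub (hf.integrableOn) ?_).abs
    apply integrableOn_const
    · exact (measure_closedBall_lt_top).ne
    · simp
  have hFm : AEMeasurable F := (hf.aemeasurable.sub_const _).norm
  set a : ℝ → ℝ := fun r => ∫ t in Metric.closedBall x r, F t with ha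
  have ha0 : ∀ r, 0 ≤ a r := fun r => integral_nonneg hF
  have hA : Tendsto (fun r => a r / r) (𝓝[>] 0) (𝓝 0) := by
    have := hA0.const_mul 2
    rw [mul_zero] at this
    refine this.congr' ?_
    filter_upwards [self_mem_nhdsWithin] with r hr
    have hr' : 0 < r := hr
    rw [setAverage_eq, Measure.real, Real.volume_closedBall, ENNReal.toReal_ofReal (by simp; linarith)]
    simp only [id, smul_eq_mul, ha, hFdef, Real.norm_eq_abs]
    field_simp
  have hfin : ∀ r, 0 < r → a r ≤ (∫ t, |f t|) + 2 * r * |f x| := by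
    intro r hr
    have hc : IntegrableOn (fun _ : ℝ => |f x|) (Metric.closedBall x r) := by
      apply integrableOn_const
      · exact (measure_closedBall_lt_top).ne
      · simp
    calc a r ≤ ∫ t in Metric.closedBall x r, (|f t| + |f x|) := by
          apply integral_mono (hloc r) (hf.abs.integrableOn.add hc)
          intro t; exact abs_sub _ _
      _ = (∫ t in Metric.closedBall x r, |f t|) + ∫ t in Metric.closedBall x r, |f x| :=
          integral_add hf.abs.integrableOn hc
      _ ≤ _ := by
          apply add_le_add
          · exact setIntegral_le_integral hf.abs (Eventually.of_forall fun _ => abs_nonneg _)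
          · rw [setIntegral_const, Measure.real, Real.volume_closedBall,
              ENNReal.toReal_ofReal (by linarith), smul_eq_mul]
  obtain ⟨C, hC⟩ : ∃ C, ∀ r, 0 < r → a r / r ≤ C := by
    have h1 : ∀ᶠ r in 𝓝[>] (0 : ℝ), a r / r < 1 := hA.eventually (gt_mem_nhds one_pos)
    rw [eventually_nhdsWithin_iff, Metric.eventually_nhds_iff] at h1
    obtain ⟨δ, hδ, h1⟩ := h1
    refine ⟨max 1 ((∫ t, |f t|) / δ + 2 * |f x|), fun r hr => ?_⟩
    rcases lt_or_ge r δ with h | h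
    · refine (h1 ?_ hr).le.trans (le_max_left _ _)
      rw [Real.dist_eq, sub_zero, abs_of_pos hr]; exact h
    · refine le_trans ?_ (le_max_right _ _)
      rw [div_le_iff₀ hr, add_mul]
      refine (hfin r hr).trans ?_
      have hi : 0 ≤ ∫ t, |f t| := integral_nonneg fun _ => abs_nonneg _
      have : (∫ t, |f t|) ≤ (∫ t, |f t|) / δ * r := by
        rw [div_mul_eq_mul_div, le_div_iff₀ hδ]; gcongr
      linarith
  have hC0 : 0 ≤ C := (div_nonneg (ha0 1) zero_le_one).trans (hC 1 one_pos)
  have hT : ∀ y : ℝ, 0 < y → ∀ k : ℕ, 4 / (4 ^ k * y) * a (2 ^ k * y) =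
      4 * (1 / 2) ^ k * (a (2 ^ k * y) / (2 ^ k * y)) := by
    intro y hy k
    have h2 : (4 : ℝ) ^ k = 2 ^ k * 2 ^ k := by rw [← mul_pow]; norm_num
    rw [h2, one_div, inv_pow]
    field_simp
  have hgeo : Summable fun k : ℕ => 4 * (1 / 2 : ℝ) ^ k * C :=
    ((summable_geometric_of_lt_one (by norm_num) (by norm_num)).mul_left 4).mul_right C
  have hbd : ∀ y : ℝ, 0 < y → ∀ k : ℕ,
      ‖4 * (1 / 2) ^ k * (a (2 ^ k * y) / (2 ^ k * y))‖ ≤ 4 * (1 / 2 : ℝ) ^ k * C := by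
    intro y hy k
    have hpos : 0 < 2 ^ k * y := by positivity
    rw [Real.norm_of_nonneg (mul_nonneg (by positivity) (div_nonneg (ha0 _) hpos.le))]
    gcongr
    exact hC _ hpos
  have hlim : Tendsto (fun y : ℝ => ∑' k : ℕ, 4 * (1 / 2 : ℝ) ^ k * (a (2 ^ k * y) / (2 ^ k * y)))
      (𝓝[>] 0) (𝓝 (∑' k : ℕ, (0 : ℝ))) := by
    apply tendsto_tsum_of_dominated_convergence hgeo
    · intro k
      have h1 : Tendsto (fun y : ℝ => 2 ^ k * y) (𝓝[>] 0) (𝓝[>] 0) := by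
        apply tendsto_nhdsWithin_of_tendsto_nhds_of_eventually_within
        · have : Tendsto (fun y : ℝ => 2 ^ k * y) (𝓝 0) (𝓝 (2 ^ k * 0)) :=
            (continuous_const.mul continuous_id).tendsto 0
          rw [mul_zero] at this
          exact this.mono_left nhdsWithin_le_nhds
        · filter_upwards [self_mem_nhdsWithin] with y hy
          have : 0 < y := hy
          exact mul_pos (by positivity) this
      have := (hA.comp h1).const_mul (4 * (1 / 2 : ℝ) ^ k)
      rw [mul_zero] at this
      exact this
    · filter_upwards [self_mem_nhdsWithin] with y hy
      exact hbd y hy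
  rw [tsum_zero] at hlim
  refine tendsto_of_tendsto_of_tendsto_of_le_of_le' tendsto_const_nhds hlim ?_ ?_
  · filter_upwards [self_mem_nhdsWithin] with y hy
    exact integral_nonneg fun t => mul_nonneg (abs_nonneg _) (pk_nonneg hy _)
  · filter_upwards [self_mem_nhdsWithin] with y hy
    have hy' : 0 < y := hy
    have := poisson_bound hF hFm x hloc hy' (by
      change Summable fun k : ℕ => 4 / (4 ^ k * y) * a (2 ^ k * y)
      simp_rw [hT y hy']
      exact Summable.of_norm_bounded hgeo (hbd y hy'))
    refine this.trans (le_of_eq ?_)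
    congr 1; ext k
    exact hT y hy' k

/-- truncated Hilbert kernel minus conjugate Poisson kernel -/
def dk (y s : ℝ) : ℝ := (if y ≤ |s| then s⁻¹ else 0) - s / (s ^ 2 + y ^ 2)

lemma dk_meas (y : ℝ) : Measurable (dk y) := by
  unfold dk
  apply Measurable.sub
  · apply Measurable.ite
    · exact measurableSet_le measurable_const (by fun_prop)
    · fun_prop
    · fun_prop
  · fun_prop

lemma dk_le {y : ℝ} (hy : 0 < y) (s : ℝ) : |dk y s| ≤ pk y s := by
  have hd := den_pos s hy
  unfold dk pk
  split_ifs with h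
  · have hs : 0 < |s| := lt_of_lt_of_le hy h
    have hs' : s ≠ 0 := abs_pos.1 hs
    have : s⁻¹ - s / (s ^ 2 + y ^ 2) = y ^ 2 / (s * (s ^ 2 + y ^ 2)) := by
      field_simp; ring
    rw [this, abs_div, abs_mul, abs_of_pos hd, abs_of_nonneg (sq_nonneg y),
      div_le_div_iff₀ (by positivity) hd]
    have : y ^ 2 ≤ y * |s| := by rw [sq]; gcongr
    calc y ^ 2 * (s ^ 2 + y ^ 2) ≤ y * |s| * (s ^ 2 + y ^ 2) := by gcongr
      _ = _ := by ring
  · rw [zero_sub, abs_neg, abs_div, abs_of_pos hd]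
    gcongr
    exact (not_le.1 h).le

lemma dk_int {y : ℝ} (hy : 0 < y) : Integrable (dk y) :=
  (pk_int hy).mono' (dk_meas y).aestronglyMeasurable
    (Eventually.of_forall fun s => by rw [Real.norm_eq_abs]; exact dk_le hy s)

lemma dk_odd (y s : ℝ) : dk y (-s) = -dk y s := by
  unfold dk
  rw [abs_neg]
  split_ifs <;> simp [neg_div, inv_neg] ; ring

lemma dk_integral (y : ℝ) : ∫ s, dk y s = 0 := by
  have h := integral_neg_eq_self (dk y) volume
  simp_rw [dk_odd, integral_neg] at h
  linarith

lemma integral_I (f : ℝ → ℝ) (k : ℝ → ℝ) :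
    ∫ t, f t * k t ∂μI = ∫ t, (Set.Ioo (-1 : ℝ) 1).indicator f t * k t := by
  unfold μI
  rw [← integral_indicator measurableSet_Ioo]
  congr 1; ext t
  by_cases h : t ∈ Set.Ioo (-1 : ℝ) 1 <;> simp [h]

lemma kernel_lim {f : ℝ → ℝ} (hf : Integrable f) {k : ℝ → ℝ → ℝ} {c x : ℝ}
    (hkm : ∀ y, Measurable (k y)) (hk : ∀ y, 0 < y → ∀ s, |k y s| ≤ pk y s)
    (hki : ∀ y, 0 < y → ∫ s, k y s = c)
    (hx : Tendsto (fun y : ℝ => ∫ t, |f t - f x| * pk y (t - x)) (𝓝[>] 0) (𝓝 0)) :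
    Tendsto (fun y : ℝ => ∫ t, f t * k y (t - x)) (𝓝[>] 0) (𝓝 (c * f x)) := by
  rw [tendsto_iff_norm_sub_tendsto_zero]
  refine tendsto_of_tendsto_of_tendsto_of_le_of_le' tendsto_const_nhds hx
    (Eventually.of_forall fun _ => norm_nonneg _) ?_
  filter_upwards [self_mem_nhdsWithin] with y hy
  have hy' : 0 < y := hy
  have hkx : Measurable fun t => k y (t - x) := (hkm y).comp (measurable_id.sub_const x)
  have hpx : Measurable fun t => pk y (t - x) := (pk_meas y).comp (measurable_id.sub_const x)
  have hpi : Integrable fun t => pk y (t - x) := (pk_int hy').comp_sub_right x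
  have hkint : Integrable fun t => k y (t - x) :=
    hpi.mono' hkx.aestronglyMeasurable (Eventually.of_forall fun t => hk y hy' _)
  have hfk : Integrable fun t => f t * k y (t - x) := by
    refine hf.mul_bdd (c := y⁻¹) hkx.aestronglyMeasurable (Eventually.of_forall fun t => ?_)
    exact (hk y hy' _).trans (pk_le hy' _)
  have hfp : Integrable fun t => f t * pk y (t - x) := by
    refine hf.mul_bdd (c := y⁻¹) hpx.aestronglyMeasurable (Eventually.of_forall fun t => ?_)
    rw [Real.norm_of_nonneg (pk_nonneg hy' _)]
    exact pk_le hy' _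
  have e : (∫ t, f t * k y (t - x)) - c * f x = ∫ t, (f t - f x) * k y (t - x) := by
    have h1 : ∫ t, k y (t - x) = c := by
      rw [integral_sub_right_eq_self (k y) x]; exact hki y hy'
    rw [← h1, mul_comm, ← integral_const_mul, ← integral_sub hfk (hkint.const_mul _)]
    congr 1; ext t; ring
  rw [e]
  apply norm_integral_le_of_norm_le
  · have : Integrable fun t => (f t - f x) * pk y (t - x) := by
      have := hfp.sub (hpi.const_mul (f x))
      refine this.congr (Eventually.of_forall fun t => ?_)
      simp only [Pi.sub_apply]; ring
    refine this.abs.congr (Eventually.of_forall fun t => ?_)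
    simp only [abs_mul, abs_of_nonneg (pk_nonneg hy' _)]
  · refine Eventually.of_forall fun t => ?_
    rw [norm_mul, Real.norm_eq_abs, Real.norm_eq_abs]
    gcongr
    exact hk y hy' _

lemma cau_im' {f : ℝ → ℝ} (hf : Integrable f μI) (x : ℝ) {y : ℝ} (hy : 0 < y) :
    (Cau f (x + y * Complex.I)).im =
      ∫ t, (Set.Ioo (-1 : ℝ) 1).indicator f t * pk y (t - x) := by
  rw [cau_im hf x hy, ← integral_I]; rfl

lemma ind_int {f : ℝ → ℝ} (hf : Integrable f μI) :
    Integrable ((Set.Ioo (-1 : ℝ) 1).indicator f) := by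
  rw [integrable_indicator_iff measurableSet_Ioo]; exact hf

/-- Boundary limit of the imaginary part. -/
lemma im_lim {f : ℝ → ℝ} (hf : Integrable f μI) : ∀ᵐ x : ℝ ∂μI,
    Tendsto (fun y : ℝ => (Cau f (x + y * Complex.I)).im) (𝓝[>] 0) (𝓝 (Real.pi * f x)) := by
  filter_upwards [ae_I, ae_restrict_of_ae (poisson_ae (ind_int hf))] with x hxI hx
  have := kernel_lim (ind_int hf) (c := Real.pi) pk_meas
    (fun y hy s => by rw [abs_of_nonneg (pk_nonneg hy s)]) (fun y hy => pk_integral hy) hx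
  rw [indicator_of_mem hxI] at this
  refine this.congr' ?_
  filter_upwards [self_mem_nhdsWithin] with y hy
  rw [cau_im' hf x hy]

/-- truncated integral -/
def PV (f : ℝ → ℝ) (y x : ℝ) : ℝ :=
  ∫ t in {t : ℝ | t ∈ Set.Ioo (-1 : ℝ) 1 ∧ y ≤ |t - x|}, f t / (t - x)

lemma trunc_meas (x y : ℝ) : MeasurableSet {t : ℝ | t ∈ Set.Ioo (-1 : ℝ) 1 ∧ y ≤ |t - x|} :=
  measurableSet_Ioo.inter (measurableSet_le measurable_const
    (by fun_prop : Measurable fun t : ℝ => |t - x|))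

lemma pv_eq {f : ℝ → ℝ} (hf : Integrable f μI) (x : ℝ) {y : ℝ} (hy : 0 < y) :
    PV f y x = (Cau f (x + y * Complex.I)).re +
      ∫ t, (Set.Ioo (-1 : ℝ) 1).indicator f t * dk y (t - x) := by
  rw [cau_re hf x hy, ← integral_I]
  have h1 : PV f y x = ∫ t, f t * (if y ≤ |t - x| then (t - x)⁻¹ else 0) ∂μI := by
    unfold PV μI
    rw [← integral_indicator (trunc_meas x y), ← integral_indicator measurableSet_Ioo]
    congr 1; ext t
    by_cases h : t ∈ Set.Ioo (-1 : ℝ) 1 <;> by_cases h' : y ≤ |t - x| <;>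
      simp only [indicator, mem_ofPred_eq, h, h', and_true, and_false, and_self, if_true, if_false,
        div_eq_mul_inv, mul_zero]
  have hdk : Integrable (fun t => f t * dk y (t - x)) μI := by
    refine hf.mul_bdd (c := y⁻¹) ((dk_meas y).comp (measurable_id.sub_const x)).aestronglyMeasurable
      (Eventually.of_forall fun t => ?_)
    exact (dk_le hy _).trans (pk_le hy _)
  have hq : Integrable (fun t => f t * ((t - x) / ((t - x) ^ 2 + y ^ 2))) μI := by
    refine hf.mul_bdd (c := y⁻¹) (Measurable.aestronglyMeasurable (by fun_prop)) (Eventually.of_forall fun t => ?_)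
    have hd := den_pos (t - x) hy
    rw [Real.norm_eq_abs, abs_div, abs_of_pos hd, div_le_iff₀ hd]
    have : y⁻¹ * ((t - x) ^ 2 + y ^ 2) = (|t - x| ^ 2 + y ^ 2) / y := by rw [sq_abs]; field_simp
    rw [this, le_div_iff₀ hy]
    nlinarith [sq_nonneg (|t - x| - y), abs_nonneg (t - x)]
  rw [h1, ← integral_add hq hdk]
  congr 1; ext t
  unfold dk; ring

lemma pv_sub_lim {f : ℝ → ℝ} (hf : Integrable f μI) : ∀ᵐ x : ℝ ∂μI,
    Tendsto (fun y : ℝ => PV f y x - (Cau f (x + y * Complex.I)).re) (𝓝[>] 0) (𝓝 0) := by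
  filter_upwards [ae_restrict_of_ae (poisson_ae (ind_int hf))] with x hx
  have := kernel_lim (ind_int hf) (c := 0) dk_meas
    (fun y hy s => dk_le hy s) (fun y hy => dk_integral y) hx
  rw [zero_mul] at this
  refine this.congr' ?_
  filter_upwards [self_mem_nhdsWithin] with y hy
  rw [pv_eq hf x hy]; ring

lemma Sf_approx {x : ℝ} (hx : x ∈ Set.Ioo (-1 : ℝ) 1) {y : ℝ} (hy : 0 < y) (hy1 : y ≤ 1) :
    ‖Sf (x + y * Complex.I) - ((Real.pi / wt x : ℝ) : ℂ) * Complex.I‖ ≤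
      3 * Real.pi / wt x ^ 3 * y := by
  have hw := wt_pos hx
  have hw2 := wt_sq hx
  have hpi := Real.pi_pos
  set z : ℂ := x + y * Complex.I with hz
  have hzim : z.im = y := zim
  have hzi : 0 < z.im := by rw [hzim]; exact hy
  set s0 : ℂ := ((Real.pi / wt x : ℝ) : ℂ) * Complex.I with hs0
  have hs0sq : s0 ^ 2 * (x ^ 2 - 1) = (Real.pi : ℂ) ^ 2 := by
    rw [hs0, mul_pow, Complex.I_sq]
    have h : ((Real.pi / wt x) ^ 2) * (1 - x ^ 2) = Real.pi ^ 2 := by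
      rw [← hw2]; field_simp
    have h' := congrArg (fun r : ℝ => (r : ℂ)) h
    push_cast at h' ⊢
    linear_combination h'
  have hS := Sf_sq hzi
  have hfac : (Sf z - s0) * (Sf z + s0) * ((z ^ 2 - 1) * (x ^ 2 - 1)) =
      (Real.pi : ℂ) ^ 2 * (x ^ 2 - z ^ 2) := by
    linear_combination (x ^ 2 - 1 : ℂ) * hS - (z ^ 2 - 1) * hs0sq
  have hn := congrArg norm hfac
  rw [norm_mul, norm_mul, norm_mul, norm_mul] at hn
  have h1 : Real.pi / wt x ≤ ‖Sf z + s0‖ := by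
    refine le_trans ?_ ((le_abs_self _).trans (Complex.abs_im_le_norm _))
    rw [Complex.add_im]
    have : s0.im = Real.pi / wt x := by rw [hs0, Complex.im_ofReal_mul]; simp
    rw [this]
    have : 0 ≤ (Sf z).im := by
      unfold Sf
      rw [hz, cau_im wt_inv_int x hy]
      apply integral_nonneg
      intro t
      have := wt_nonneg t
      positivity
    linarith
  have h2 : ‖(x : ℂ) ^ 2 - 1‖ = wt x ^ 2 := by
    rw [hw2]
    have : (x : ℂ) ^ 2 - 1 = ((-(1 - x ^ 2) : ℝ) : ℂ) := by push_cast; ring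
    rw [this, Complex.norm_real, norm_neg, Real.norm_of_nonneg]
    rw [← hw2]; positivity
  have h3 : wt x ^ 2 ≤ ‖z ^ 2 - 1‖ := by
    have : z ^ 2 - 1 = (z - 1) * (z + 1) := by ring
    rw [this, norm_mul]
    have ha : 1 - x ≤ ‖z - 1‖ := by
      refine le_trans ?_ ((neg_le_abs _).trans (Complex.abs_re_le_norm _))
      simp [hz]
    have hb : 1 + x ≤ ‖z + 1‖ := by
      refine le_trans ?_ ((le_abs_self _).trans (Complex.abs_re_le_norm _))
      simp [hz, add_comm]
    rw [hw2]
    calc 1 - x ^ 2 = (1 - x) * (1 + x) := by ring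
      _ ≤ _ := by
        apply mul_le_mul ha hb
        · linarith [hx.1]
        · exact norm_nonneg _
  have h4 : ‖(x : ℂ) ^ 2 - z ^ 2‖ ≤ 3 * y := by
    have : (x : ℂ) ^ 2 - z ^ 2 = (y : ℂ) * (-(2 * x) * Complex.I + y) := by
      rw [hz]; linear_combination (-(y : ℂ) ^ 2) * Complex.I_sq
    rw [this, norm_mul, Complex.norm_real, Real.norm_of_nonneg hy.le, mul_comm]
    apply mul_le_mul_of_nonneg_right _ hy.le
    refine (norm_add_le _ _).trans ?_
    rw [norm_mul, Complex.norm_I, norm_neg, norm_mul, Complex.norm_real, Complex.norm_real,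
      Real.norm_of_nonneg hy.le, Real.norm_eq_abs]
    have : |x| ≤ 1 := abs_le.2 ⟨hx.1.le, hx.2.le⟩
    simp
    linarith
  have h5 : ‖(Real.pi : ℂ) ^ 2‖ = Real.pi ^ 2 := by
    rw [norm_pow, Complex.norm_real, Real.norm_of_nonneg hpi.le]
  rw [h2, h5] at hn
  have h6 : ‖Sf z - s0‖ * ((Real.pi / wt x) * (wt x ^ 2 * wt x ^ 2)) ≤ Real.pi ^ 2 * (3 * y) := by
    calc ‖Sf z - s0‖ * ((Real.pi / wt x) * (wt x ^ 2 * wt x ^ 2))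
        ≤ ‖Sf z - s0‖ * (‖Sf z + s0‖ * (‖z ^ 2 - 1‖ * wt x ^ 2)) := by gcongr
      _ = Real.pi ^ 2 * ‖(x : ℂ) ^ 2 - z ^ 2‖ := by rw [← hn]; ring
      _ ≤ _ := by gcongr
  have h7 : (Real.pi / wt x) * (wt x ^ 2 * wt x ^ 2) = Real.pi * wt x ^ 3 := by field_simp
  rw [h7] at h6
  rw [div_mul_eq_mul_div, le_div_iff₀ (by positivity)]
  have : Real.pi * (‖Sf z - s0‖ * wt x ^ 3) ≤ Real.pi * (3 * Real.pi * y) := by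
    calc _ = ‖Sf z - s0‖ * (Real.pi * wt x ^ 3) := by ring
      _ ≤ _ := h6
      _ = _ := by ring
  exact le_of_mul_le_mul_left this hpi

lemma rel_bdry {f g : ℝ → ℝ} (hg : Integrable g μI) (h : HRel f g) {x : ℝ}
    (hx : x ∈ Set.Ioo (-1 : ℝ) 1) :
    Tendsto (fun y : ℝ => Cau f (x + y * Complex.I) +
      (((wt x)⁻¹ : ℝ) : ℂ) * (Complex.I * Cau (fun t => wt t * g t) (x + y * Complex.I)))
      (𝓝[>] 0) (𝓝 0) := by
  have hw := wt_pos hx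
  have hpi := Real.pi_pos
  have h0 := (cau_small (wt_mul_int hg) x).norm.const_mul (Real.pi⁻¹ * (3 * Real.pi / wt x ^ 3))
  rw [norm_zero, mul_zero] at h0
  apply squeeze_zero_norm' _ h0
  have h1 : ∀ᶠ y : ℝ in 𝓝[>] 0, y ≤ 1 :=
    mem_nhdsWithin_of_mem_nhds (Iic_mem_nhds one_pos)
  filter_upwards [self_mem_nhdsWithin, h1] with y hy hy1
  have hy : 0 < y := hy
  rw [h _ (by rw [zim]; exact hy)]
  set P := Cau (fun t => wt t * g t) (x + y * Complex.I)
  have hpc : (Real.pi : ℂ) ≠ 0 := by exact_mod_cast hpi.ne'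
  have hwc : (wt x : ℂ) ≠ 0 := by exact_mod_cast hw.ne'
  have e : -(Real.pi : ℂ)⁻¹ * Sf (x + y * Complex.I) * P + (((wt x)⁻¹ : ℝ) : ℂ) * (Complex.I * P) =
     -((Real.pi⁻¹ : ℝ) : ℂ) * ((Sf (x + y * Complex.I) - ((Real.pi / wt x : ℝ) : ℂ) * Complex.I) * P) := by
    push_cast
    field_simp
    ring
  rw [e, norm_mul, norm_neg, Complex.norm_real, Real.norm_of_nonneg (by positivity), norm_mul,
    norm_mul, Complex.norm_real, Real.norm_of_nonneg hy.le]
  have := Sf_approx hx hy hy1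
  calc _ ≤ Real.pi⁻¹ * (3 * Real.pi / wt x ^ 3 * y * ‖P‖) := by gcongr
    _ = _ := by ring

lemma rel_pv {f g : ℝ → ℝ} (hf : Integrable f μI) (hg : Integrable g μI) (h : HRel f g) :
    ∀ᵐ x : ℝ ∂μI, Tendsto (fun y : ℝ => PV f y x) (𝓝[>] 0) (𝓝 (Real.pi * g x)) := by
  filter_upwards [ae_I, im_lim (wt_mul_int hg), pv_sub_lim hf] with x hx h1 h2
  have hw := wt_pos hx
  have h3 := (Complex.continuous_re.tendsto 0).comp (rel_bdry hg h hx)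
  have h4 := (h2.add h3).add (h1.const_mul (wt x)⁻¹)
  have e : (0 : ℝ) + (0 : ℂ).re + (wt x)⁻¹ * (Real.pi * (wt x * g x)) = Real.pi * g x := by
    simp; field_simp
  rw [e] at h4
  refine h4.congr fun y => ?_
  simp only [Function.comp, Complex.add_re, Complex.re_ofReal_mul, Complex.I_mul_re]
  ring

lemma rel_re {f g : ℝ → ℝ} (hf : Integrable f μI) (hg : Integrable g μI) (h : HRel f g) :
    ∀ᵐ x : ℝ ∂μI, Tendsto (fun y : ℝ => (wt x)⁻¹ *
      (Cau (fun t => wt t * g t) (x + y * Complex.I)).re) (𝓝[>] 0) (𝓝 (-(Real.pi * f x))) := by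
  filter_upwards [ae_I, im_lim hf] with x hx h1
  have h3 := (Complex.continuous_im.tendsto 0).comp (rel_bdry hg h hx)
  have h4 := h3.sub h1
  rw [Complex.zero_im, zero_sub] at h4
  refine h4.congr fun y => ?_
  simp only [Function.comp, Complex.add_im, Complex.im_ofReal_mul, Complex.I_mul_im]
  ring

/-- the weight-commutator majorant -/
def Kf (g : ℝ → ℝ) (x : ℝ) : ℝ := 2 * (wt x)⁻¹ * ∫ t, |g t| / (wt t + wt x) ∂μI

lemma kf_int {g : ℝ → ℝ} (hg : Integrable g μI) {x : ℝ} (hx : x ∈ Set.Ioo (-1 : ℝ) 1) :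
    Integrable (fun t => |g t| / (wt t + wt x)) μI := by
  have hw := wt_pos hx
  simp_rw [div_eq_mul_inv]
  refine hg.abs.mul_bdd (c := (wt x)⁻¹) (Measurable.aestronglyMeasurable ?_)
    (Eventually.of_forall fun t => ?_)
  · exact (wt_meas.add_const _).inv
  · have := wt_nonneg t
    rw [norm_inv, Real.norm_of_nonneg (by positivity)]
    apply inv_anti₀ hw
    linarith

lemma re_bound {g : ℝ → ℝ} (hg : Integrable g μI) {x : ℝ} (hx : x ∈ Set.Ioo (-1 : ℝ) 1)
    {y : ℝ} (hy : 0 < y) :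
    |(wt x)⁻¹ * (Cau (fun t => wt t * g t) (x + y * Complex.I)).re| ≤
      ‖Cau g (x + y * Complex.I)‖ + Kf g x := by
  have hw := wt_pos hx
  have hz : 0 < ((x : ℂ) + y * Complex.I).im := by rw [zim]; exact hy
  have hi : Integrable (fun t => (wt t - wt x) * g t) μI := by
    refine ((wt_mul_int hg).sub (hg.const_mul (wt x))).congr (Eventually.of_forall fun t => ?_)
    simp only [Pi.sub_apply]; ring
  have e : Cau (fun t => wt t * g t) (x + y * Complex.I) =
      wt x * Cau g (x + y * Complex.I) + Cau (fun t => (wt t - wt x) * g t) (x + y * Complex.I) := by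
    rw [← cau_smul, ← cau_add (hg.const_mul _) hi hz]
    congr 1; ext t; ring
  have hb : |(Cau (fun t => (wt t - wt x) * g t) (x + y * Complex.I)).re| ≤
      ∫ t, 2 * (|g t| / (wt t + wt x)) ∂μI := by
    rw [cau_re hi x hy]
    rw [← Real.norm_eq_abs]
    apply norm_integral_le_of_norm_le ((kf_int hg hx).const_mul 2)
    filter_upwards [ae_I] with t ht
    have hwt := wt_pos ht
    have h1 : (wt t - wt x) * (wt t + wt x) = -((t - x) * (t + x)) := by
      have := wt_sq ht
      have := wt_sq hx
      nlinarith
    have h2 : wt t - wt x = -((t - x) * (t + x)) / (wt t + wt x) := by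
      rw [eq_div_iff (by positivity)]; exact h1
    have hd := den_pos (t - x) hy
    have h3 : |(t - x) * (t - x) / ((t - x) ^ 2 + y ^ 2)| ≤ 1 := by
      rw [abs_of_nonneg (div_nonneg (mul_self_nonneg _) hd.le), div_le_one hd]
      nlinarith [sq_nonneg y]
    have h4 : |t + x| ≤ 2 := by
      rw [abs_le]; constructor <;> linarith [ht.1, ht.2, hx.1, hx.2]
    have h5 : (wt t - wt x) * g t * ((t - x) / ((t - x) ^ 2 + y ^ 2)) =
        -((t - x) * (t - x) / ((t - x) ^ 2 + y ^ 2)) * (t + x) * (g t / (wt t + wt x)) := by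
      rw [h2]; ring
    rw [h5, Real.norm_eq_abs, abs_mul, abs_mul, abs_neg, abs_div (g t), abs_of_pos (add_pos hwt hw)]
    have hq : 0 ≤ |g t| / (wt t + wt x) := by positivity
    apply mul_le_mul_of_nonneg_right _ hq
    calc _ ≤ (1 : ℝ) * 2 := mul_le_mul h3 h4 (abs_nonneg _) zero_le_one
      _ = 2 := by ring
  rw [e, Complex.add_re, Complex.re_ofReal_mul, mul_add, ← mul_assoc, inv_mul_cancel₀ hw.ne', one_mul]
  refine (abs_add_le _ _).trans (add_le_add (Complex.abs_re_le_norm _) ?_)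
  rw [abs_mul, abs_of_pos (inv_pos.2 hw)]
  unfold Kf
  rw [integral_const_mul] at hb
  calc _ ≤ (wt x)⁻¹ * (2 * ∫ t, |g t| / (wt t + wt x) ∂μI) := by gcongr
    _ = _ := by ring

def th (s : ℝ) : ℝ := 4 * s * (Real.log (2 * s) ^ 2 + Real.log (2 * s))

lemma log_half {a : ℝ} (ha : 0 ≤ a) : 1 / 2 ≤ Real.log (2 + a) := by
  have h1 : Real.log 2 ≤ Real.log (2 + a) := Real.log_le_log (by norm_num) (by linarith)
  have := Real.log_two_gt_d9
  linarith

lemma th_tangent {a b : ℝ} (ha : 1 ≤ a) (hb : 1 ≤ b) :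
    th a + 4 * (Real.log (2 * a) ^ 2 + 3 * Real.log (2 * a) + 1) * (b - a) ≤ th b := by
  unfold th
  set A := Real.log (2 * a) with hA
  set B := Real.log (2 * b) with hB
  have hA0 : 0 ≤ A := Real.log_nonneg (by linarith)
  have hd : Real.log (a / b) = A - B := by
    rw [Real.log_div (by linarith) (by linarith), hA, hB, Real.log_mul (by norm_num) (by linarith),
      Real.log_mul (by norm_num) (by linarith)]
    ring
  have h1 : A - B ≤ a / b - 1 := by
    rw [← hd]; exact Real.log_le_sub_one_of_pos (by positivity)
  have h2 : 0 ≤ b * (B - A - 1) + a := by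
    have : b * (A - B) ≤ b * (a / b - 1) := by gcongr
    have e : b * (a / b - 1) = a - b := by field_simp
    rw [e] at this
    linarith
  have h3 : 0 ≤ (2 * A + 1) * (b * (B - A - 1) + a) := by positivity
  have h4 : 0 ≤ b * (B - A) ^ 2 := by positivity
  nlinarith

lemma th_nonneg {a : ℝ} (ha : 1 ≤ a) : 0 ≤ th a := by
  have : 0 ≤ Real.log (2 * a) := Real.log_nonneg (by linarith)
  unfold th; positivity

lemma th_growth {G : ℝ} (hG : 0 ≤ G) :
    th (1 + Real.pi * G) ≤ 96 * (4 + 5 * (G * Real.log (2 + G) ^ 2)) := by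
  have hpi := Real.pi_pos
  have hpi4 := Real.pi_lt_four
  have hl := log_half hG
  set l := Real.log (2 + G) with hl'
  have h0 : 0 ≤ Real.log (2 * (1 + Real.pi * G)) := Real.log_nonneg (by nlinarith)
  have h1 : Real.log (2 * (1 + Real.pi * G)) ≤ 4 * l := by
    have : Real.log (2 * (1 + Real.pi * G)) ≤ Real.log (8 * (2 + G)) := by
      apply Real.log_le_log (by positivity); nlinarith
    rw [Real.log_mul (x := 8) (y := 2 + G) (by norm_num) (by linarith)] at this
    have h8 : Real.log 8 = 3 * Real.log 2 := by
      rw [show (8 : ℝ) = 2 ^ 3 by norm_num, Real.log_pow]; norm_num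
    have h2 : Real.log 2 ≤ l := Real.log_le_log (by norm_num) (by linarith)
    linarith
  have h2 : Real.log (2 * (1 + Real.pi * G)) ^ 2 + Real.log (2 * (1 + Real.pi * G)) ≤ 24 * l ^ 2 := by
    nlinarith
  have h3 : l ^ 2 ≤ 4 + G * l ^ 2 := by
    rcases le_or_gt G 1 with h | h
    · have : l ≤ 2 := by
        have := Real.log_le_sub_one_of_pos (show 0 < 2 + G by linarith)
        linarith
      have : 0 ≤ G * l ^ 2 := by positivity
      nlinarith
    · nlinarith [sq_nonneg l]
  unfold th
  calc _ ≤ 4 * (1 + 4 * G) * (24 * l ^ 2) := by gcongr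
    _ = 96 * (l ^ 2 + 4 * (G * l ^ 2)) := by ring
    _ ≤ _ := by linarith

lemma re_Dlog {D : ℂ} (hD : 1 ≤ D.re) :
    ‖D‖ * Real.log ‖D‖ ≤ th D.re - (D * Complex.log D ^ 2).re := by
  have hD0 : D ≠ 0 := by rintro rfl; simp at hD; linarith
  set r := ‖D‖ with hr
  set v := D.re with hv
  have hvr : v ≤ r := Complex.re_le_norm D
  have hr1 : 1 ≤ r := hD.trans hvr
  set L := Real.log r with hL
  have hL0 : 0 ≤ L := Real.log_nonneg hr1
  set β := D.arg with hβ
  have hcos : v = r * Real.cos β := (Complex.norm_mul_cos_arg D).symm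
  have hsin : D.im = r * Real.sin β := (Complex.norm_mul_sin_arg D).symm
  have hc0 : 0 ≤ Real.cos β := by nlinarith
  have hc1 := Real.cos_le_one β
  have hsb : Real.sin β ^ 2 ≤ Real.sin β * β := by
    have := Real.sin_sq_le_sq (x := β)
    have h1 : |Real.sin β| ≤ |β| := Real.abs_sin_le_abs
    have h2 : 0 ≤ Real.sin β * β := by
      rcases le_or_gt 0 β with h | h
      · exact mul_nonneg (Real.sin_nonneg_of_nonneg_of_le_pi h (Complex.arg_le_pi D)) h
      · have := Real.sin_nonpos_of_nonpos_of_neg_pi_le h.le (Complex.neg_pi_lt_arg D).le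
        exact mul_nonneg_of_nonpos_of_nonpos this h.le
    rw [← abs_of_nonneg h2, abs_mul, ← sq_abs, sq]
    gcongr
  have hsc := Real.sin_sq_add_cos_sq β
  have hs : r - v ≤ D.im * β := by
    rw [hcos, hsin]
    have : 1 - Real.cos β ≤ Real.sin β * β := by nlinarith
    nlinarith
  have hlog : Complex.log D = L + β * Complex.I := by
    apply Complex.ext <;> simp [hL, hβ, hr, Complex.log_re, Complex.log_im]
  have hre : (D * Complex.log D ^ 2).re = v * (L ^ 2 - β ^ 2) - D.im * (2 * L * β) := by
    rw [hlog]; simp [Complex.mul_re, sq, Complex.mul_im]; ring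
  rw [hre]
  have key : v * (L ^ 2 + 2 * L) ≤ r * L + th v := by
    unfold th
    set l := Real.log (2 * v) with hl
    have hl0 : 0 ≤ l := Real.log_nonneg (by linarith)
    rcases le_or_gt r (4 * v ^ 2) with h | h
    · have : L ≤ 2 * l := by
        have e : 2 * l = Real.log ((2 * v) ^ 2) := by rw [Real.log_pow]; norm_num [hl]
        rw [e]
        apply Real.log_le_log (by linarith)
        nlinarith
      have h1 : L ^ 2 + 2 * L ≤ 4 * (l ^ 2 + l) := by nlinarith
      have h2 : 0 ≤ r * L := by positivity
      have : v * (L ^ 2 + 2 * L) ≤ v * (4 * (l ^ 2 + l)) := by gcongr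
      nlinarith
    · have hsq : v ≤ Real.sqrt r / 2 := by
        rw [le_div_iff₀ (by norm_num)]
        apply Real.le_sqrt_of_sq_le
        nlinarith
      have hs1 : 0 < Real.sqrt r := Real.sqrt_pos.2 (by linarith)
      have hl2 : L + 2 ≤ 2 * Real.sqrt r := by
        have := Real.log_le_sub_one_of_pos hs1
        rw [Real.log_sqrt (by linarith)] at this
        linarith
      have h1 : v * (L + 2) ≤ r := by
        calc v * (L + 2) ≤ Real.sqrt r / 2 * (2 * Real.sqrt r) := by gcongr
          _ = Real.sqrt r * Real.sqrt r := by ring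
          _ = r := Real.mul_self_sqrt (by linarith)
      have h2 : v * (L + 2) * L ≤ r * L := by gcongr
      have h3 : 0 ≤ 4 * v * (l ^ 2 + l) := by positivity
      nlinarith
  have h5 : L * (r - v) ≤ L * (D.im * β) := by gcongr
  have h6 : 0 ≤ v * β ^ 2 := by positivity
  nlinarith

/-- `1 - i C G` -/
def DD (G : ℝ → ℝ) (z : ℂ) : ℂ := 1 - Complex.I * Cau G z

lemma DD_re (G : ℝ → ℝ) (z : ℂ) : (DD G z).re = 1 + (Cau G z).im := by
  unfold DD; simp

lemma cau_im_nonneg {G : ℝ → ℝ} (hG : ∀ t, 0 ≤ G t) (hi : Integrable G μI) {z : ℂ}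
    (hz : 0 < z.im) : 0 ≤ (Cau G z).im := by
  have : z = (z.re : ℂ) + z.im * Complex.I := (Complex.re_add_im z).symm
  rw [this, cau_im hi _ hz]
  exact integral_nonneg fun t => mul_nonneg (hG t) (by positivity)

lemma DD_re_ge {G : ℝ → ℝ} (hG : ∀ t, 0 ≤ G t) (hi : Integrable G μI) {z : ℂ}
    (hz : 0 < z.im) : 1 ≤ (DD G z).re := by
  rw [DD_re]; linarith [cau_im_nonneg hG hi hz]

lemma DD_diff {G : ℝ → ℝ} (hi : Integrable G μI) {z : ℂ} (hz : 0 < z.im) :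
    DifferentiableAt ℂ (DD G) z := by
  unfold DD
  exact (differentiableAt_const _).sub ((differentiableAt_const _).mul (cau_hasDerivAt hi hz))

lemma DD_slit {G : ℝ → ℝ} (hG : ∀ t, 0 ≤ G t) (hi : Integrable G μI) {z : ℂ}
    (hz : 0 < z.im) : DD G z ∈ Complex.slitPlane := by
  left; linarith [DD_re_ge hG hi hz]

lemma DL_diff {G : ℝ → ℝ} (hG : ∀ t, 0 ≤ G t) (hi : Integrable G μI) {z : ℂ}
    (hz : 0 < z.im) : DifferentiableAt ℂ (fun z => DD G z * Complex.log (DD G z) ^ 2) z :=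
  (DD_diff hi hz).mul (((DD_diff hi hz).clog (DD_slit hG hi hz)).pow 2)

lemma DL_bound {G : ℝ → ℝ} (hG : ∀ t, 0 ≤ G t) (hi : Integrable G μI) {m : ℝ}
    (hm : ∫ t, |G t| ∂μI ≤ m) {z : ℂ} (hz : 0 < z.im)
    (hd : ∀ t ∈ Set.Ioo (-1 : ℝ) 1, 1 ≤ ‖(t : ℂ) - z‖) :
    ‖DD G z * Complex.log (DD G z) ^ 2‖ ≤ (1 + m) * (m + 4) ^ 2 := by
  have h1 : ‖DD G z‖ ≤ 1 + m := by
    unfold DD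
    refine (norm_sub_le _ _).trans ?_
    rw [norm_mul, Complex.norm_I, one_mul, norm_one]
    have := cau_norm_le hi one_pos hd
    rw [div_one] at this
    linarith
  have h0 : 1 ≤ ‖DD G z‖ := (DD_re_ge hG hi hz).trans (Complex.re_le_norm _)
  have h2 : ‖Complex.log (DD G z)‖ ≤ m + 4 := by
    refine (Complex.norm_le_abs_re_add_abs_im _).trans ?_
    rw [Complex.log_re, Complex.log_im, abs_of_nonneg (Real.log_nonneg h0)]
    have := Real.log_le_sub_one_of_pos (show 0 < ‖DD G z‖ by linarith)
    have := Complex.abs_arg_le_pi (DD G z)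
    have := Real.pi_lt_four
    linarith
  rw [norm_mul, norm_pow]
  gcongr
  linarith

lemma line_cont {F : ℂ → ℂ} {y : ℝ} (hF : ∀ x : ℝ, ContinuousAt F (x + y * Complex.I)) :
    Continuous fun x : ℝ => F (x + y * Complex.I) := by
  rw [continuous_iff_continuousAt]
  intro x
  exact ContinuousAt.comp (f := fun x : ℝ => (x : ℂ) + y * Complex.I) (hF x) (by fun_prop)

lemma bottom_bound {G : ℝ → ℝ} (hG : ∀ t, 0 ≤ G t) (hi : Integrable G μI) {m : ℝ}
    (hm : ∫ t, |G t| ∂μI ≤ m) {y : ℝ} (hy : 0 < y) (hy1 : y < 1) :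
    ‖∫ x in (-2 : ℝ)..2, DD G (x + y * Complex.I) * Complex.log (DD G (x + y * Complex.I)) ^ 2‖ ≤
      8 * ((1 + m) * (m + 4) ^ 2) := by
  set F : ℂ → ℂ := fun z => DD G z * Complex.log (DD G z) ^ 2 with hF
  set C := (1 + m) * (m + 4) ^ 2 with hC
  have hm0 : 0 ≤ m := (integral_nonneg fun _ => abs_nonneg _).trans hm
  have hC0 : 0 ≤ C := by positivity
  have h := Complex.integral_boundary_rect_eq_zero_of_differentiableOn F
    (-2 + y * Complex.I) (2 + 2 * Complex.I) (by
      intro z hz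
      refine (DL_diff hG hi ?_).differentiableWithinAt
      have := hz.2
      simp only [mem_preimage] at this
      rw [uIcc_of_le (by simp; linarith)] at this
      have := this.1
      simp at this
      linarith)
  have e1 : (-2 + y * Complex.I : ℂ).re = -2 := by simp
  have e2 : (-2 + y * Complex.I : ℂ).im = y := by simp
  have e3 : (2 + 2 * Complex.I : ℂ).re = 2 := by simp
  have e4 : (2 + 2 * Complex.I : ℂ).im = 2 := by simp
  rw [e1, e2, e3, e4] at h
  have ht : ‖∫ x in (-2 : ℝ)..2, F (x + (2 : ℝ) * Complex.I)‖ ≤ C * |2 - (-2)| := by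
    apply intervalIntegral.norm_integral_le_of_norm_le_const
    intro x _
    apply DL_bound hG hi hm
    · rw [zim]; norm_num
    · intro t _
      have := norm_sub_ge_im t (x + (2 : ℝ) * Complex.I)
      rw [zim] at this
      refine le_trans ?_ this
      norm_num
  have hside : ∀ a : ℝ, 2 ≤ |a| →
      ‖∫ s in (y : ℝ)..2, F (a + s * Complex.I)‖ ≤ C * |2 - y| := by
    intro a ha
    apply intervalIntegral.norm_integral_le_of_norm_le_const
    intro s hs
    rw [uIoc_of_le (by linarith)] at hs
    apply DL_bound hG hi hm
    · rw [zim]; linarith [hs.1]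
    · intro t ht
      have h1 := Complex.abs_re_le_norm ((t : ℂ) - (a + s * Complex.I))
      rw [Complex.sub_re, zre, Complex.ofReal_re] at h1
      refine le_trans ?_ h1
      have h2 := abs_sub_abs_le_abs_sub a t
      rw [abs_sub_comm] at h2
      have : |t| ≤ 1 := abs_le.2 ⟨ht.1.le, ht.2.le⟩
      linarith
  have hr := hside 2 (by norm_num)
  have hl := hside (-2) (by norm_num)
  have hy2 : |2 - y| ≤ 2 := by rw [abs_le]; constructor <;> linarith
  have e5 : (∫ x in (-2 : ℝ)..2, F (x + y * Complex.I)) =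
      (∫ x in (-2 : ℝ)..2, F (x + (2 : ℝ) * Complex.I))
      - Complex.I • (∫ s in (y : ℝ)..2, F ((2 : ℝ) + s * Complex.I))
      + Complex.I • (∫ s in (y : ℝ)..2, F ((-2 : ℝ) + s * Complex.I)) := by
    linear_combination h
  rw [e5]
  refine (norm_add_le _ _).trans ((add_le_add_left (norm_sub_le _ _) _).trans ?_)
  rw [norm_smul, norm_smul, Complex.norm_I, one_mul, one_mul]
  have h4 : |(2 : ℝ) - (-2)| = 4 := by norm_num
  rw [h4] at ht
  have h5 : C * |2 - y| ≤ C * 2 := by gcongr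
  linarith

lemma jensen {G : ℝ → ℝ} (hG : ∀ t, 0 ≤ G t) (hi : Integrable G μI)
    (hH : Integrable (fun t => th (1 + Real.pi * G t) - th 1) μI) (x : ℝ) {y : ℝ} (hy : 0 < y) :
    Real.pi * (th (DD G (x + y * Complex.I)).re - th 1) ≤
      ∫ t, (Set.Ioo (-1 : ℝ) 1).indicator (fun t => th (1 + Real.pi * G t) - th 1) t * pk y (t - x) := by
  have hz : 0 < ((x : ℂ) + y * Complex.I).im := by rw [zim]; exact hy
  have hpi := Real.pi_pos
  set a := (DD G (x + y * Complex.I)).re with ha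
  have ha1 : 1 ≤ a := DD_re_ge hG hi hz
  set c := 4 * (Real.log (2 * a) ^ 2 + 3 * Real.log (2 * a) + 1)
  have hpx : Measurable fun t => pk y (t - x) := (pk_meas y).comp (measurable_id.sub_const x)
  have hpi' : Integrable fun t => pk y (t - x) := (pk_int hy).comp_sub_right x
  have hmul : ∀ {f : ℝ → ℝ}, Integrable f μI →
      Integrable fun t => (Set.Ioo (-1 : ℝ) 1).indicator f t * pk y (t - x) := by
    intro f hf
    refine (ind_int hf).mul_bdd (c := y⁻¹) hpx.aestronglyMeasurable (Eventually.of_forall fun t => ?_)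
    rw [Real.norm_of_nonneg (pk_nonneg hy _)]
    exact pk_le hy _
  have e : Real.pi * (th a - th 1) = ∫ t, (((th a - th 1) - c * (a - 1)) * pk y (t - x) +
      c * Real.pi * ((Set.Ioo (-1 : ℝ) 1).indicator G t * pk y (t - x))) := by
    rw [integral_add (hpi'.const_mul _) ((hmul hi).const_mul _), integral_const_mul,
      integral_const_mul, ← cau_im' hi x hy, integral_sub_right_eq_self (pk y) x, pk_integral hy]
    have : (Cau G (x + y * Complex.I)).im = a - 1 := by rw [ha, DD_re]; ring
    rw [this]; ring
  rw [e]
  apply integral_mono ((hpi'.const_mul _).add ((hmul hi).const_mul _)) (hmul hH)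
  intro t
  have hp := pk_nonneg hy (t - x)
  simp only [Pi.add_apply]
  by_cases ht : t ∈ Set.Ioo (-1 : ℝ) 1
  · simp only [indicator_of_mem ht]
    have := th_tangent ha1 (show 1 ≤ 1 + Real.pi * G t by have := hG t; nlinarith)
    have h2 : (th a - th 1) - c * (a - 1) + c * Real.pi * G t ≤ th (1 + Real.pi * G t) - th 1 := by
      have e2 : c * (1 + Real.pi * G t - a) = c * Real.pi * G t - c * (a - 1) := by ring
      linarith
    calc _ = ((th a - th 1) - c * (a - 1) + c * Real.pi * G t) * pk y (t - x) := by ring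
      _ ≤ _ := by gcongr
  · simp only [indicator_of_notMem ht]
    have := th_tangent ha1 (le_refl (1 : ℝ))
    have h2 : (th a - th 1) - c * (a - 1) ≤ 0 := by
      have e2 : c * (1 - a) = - (c * (a - 1)) := by ring
      linarith
    have := mul_nonpos_of_nonpos_of_nonneg h2 hp
    simpa using this

lemma pk_even (y s : ℝ) : pk y (-s) = pk y s := by unfold pk; rw [neg_sq]

lemma pois_conv {H : ℝ → ℝ} (hH : Integrable H) {y : ℝ} (hy : 0 < y) :
    Integrable (fun x => ∫ t, H t * pk y (t - x)) ∧
    ∫ x, ∫ t, H t * pk y (t - x) = (∫ t, H t) * Real.pi := by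
  have e : (fun x => ∫ t, H t * pk y (t - x)) =
      convolution H (pk y) (ContinuousLinearMap.mul ℝ ℝ) volume := by
    ext x
    unfold convolution
    congr 1; ext t
    rw [ContinuousLinearMap.mul_apply', ← pk_even, neg_sub]
  rw [e]
  refine ⟨hH.integrable_convolution _ (pk_int hy), ?_⟩
  rw [integral_convolution _ hH (pk_int hy), pk_integral hy, ContinuousLinearMap.mul_apply']


def Bm (m : ℝ) : ℝ := 32 + 96 * (8 + 5 * m) + 8 * ((1 + 4 * m) * (4 * m + 4) ^ 2)

lemma le_four_mod {a : ℝ} (ha : 0 ≤ a) : a ≤ 4 * (a * Real.log (2 + a) ^ 2) := by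
  have := log_half ha
  have h : 1 / 4 ≤ Real.log (2 + a) ^ 2 := by nlinarith
  nlinarith

lemma th_one : th 1 ≤ 8 := by
  unfold th
  have h1 := Real.log_two_lt_d9
  have h2 := Real.log_two_gt_d9
  norm_num
  nlinarith

lemma vol_I : ∫ _t : ℝ, (1 : ℝ) ∂μI = 2 := by
  unfold μI; simp [Measure.real]; norm_num

lemma th_cont : ContinuousOn th (Set.Ici 1) := by
  unfold th
  have : ContinuousOn (fun s : ℝ => Real.log (2 * s)) (Set.Ici 1) := by
    apply ContinuousOn.log (by fun_prop)
    intro x hx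
    have : (1 : ℝ) ≤ x := hx
    linarith
  fun_prop

lemma H_int {G : ℝ → ℝ} (hG : ∀ t, 0 ≤ G t) (hi : Integrable G μI)
    (hMi : Integrable (fun t => G t * Real.log (2 + G t) ^ 2) μI) {m : ℝ}
    (hM : ∫ t, G t * Real.log (2 + G t) ^ 2 ∂μI ≤ m) :
    Integrable (fun t => th (1 + Real.pi * G t) - th 1) μI ∧
    ∫ t, th (1 + Real.pi * G t) - th 1 ∂μI ≤ 96 * (8 + 5 * m) := by
  have hg1 : ∀ t, 1 ≤ 1 + Real.pi * G t := fun t => by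
    have := mul_nonneg Real.pi_pos.le (hG t); linarith
  have hb : Integrable (fun t => 96 * (4 * 1 + 5 * (G t * Real.log (2 + G t) ^ 2))) μI :=
    (((integrable_const (1 : ℝ)).const_mul 4).add (hMi.const_mul 5)).const_mul 96
  have hm : AEStronglyMeasurable (fun t => th (1 + Real.pi * G t)) μI := by
    have : AEMeasurable G μI := hi.aemeasurable
    unfold th
    exact (by fun_prop : AEMeasurable _ μI).aestronglyMeasurable
  have hi1 : Integrable (fun t => th (1 + Real.pi * G t)) μI := by
    refine hb.mono' hm (Eventually.of_forall fun t => ?_)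
    rw [Real.norm_of_nonneg (th_nonneg (hg1 t)), mul_one]
    exact th_growth (hG t)
  have hi2 : Integrable (fun t => th (1 + Real.pi * G t) - th 1) μI := hi1.sub (integrable_const _)
  refine ⟨hi2, ?_⟩
  calc _ ≤ ∫ t, 96 * (4 * 1 + 5 * (G t * Real.log (2 + G t) ^ 2)) ∂μI := by
        apply integral_mono hi2 hb
        intro t
        have := th_growth (hG t)
        have := th_nonneg (le_refl (1 : ℝ))
        simp only
        linarith
    _ = 96 * (4 * 2 + 5 * ∫ t, G t * Real.log (2 + G t) ^ 2 ∂μI) := by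
        rw [integral_const_mul, integral_add ((integrable_const (1 : ℝ)).const_mul 4) (hMi.const_mul 5),
          integral_const_mul, integral_const_mul, vol_I]
    _ ≤ _ := by linarith

lemma main_real {G : ℝ → ℝ} (hG : ∀ t, 0 ≤ G t) (hi : Integrable G μI)
    (hMi : Integrable (fun t => G t * Real.log (2 + G t) ^ 2) μI) {m : ℝ}
    (hM : ∫ t, G t * Real.log (2 + G t) ^ 2 ∂μI ≤ m) {y : ℝ} (hy : 0 < y) (hy1 : y < 1) :
    ∫ x in (-2 : ℝ)..2, ‖DD G (x + y * Complex.I)‖ * Real.log ‖DD G (x + y * Complex.I)‖ ≤ Bm m := by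
  have hpi := Real.pi_pos
  have hz : ∀ x : ℝ, 0 < ((x : ℂ) + y * Complex.I).im := fun x => by rw [zim]; exact hy
  have hm1 : ∫ t, |G t| ∂μI ≤ 4 * m := by
    calc ∫ t, |G t| ∂μI ≤ ∫ t, 4 * (G t * Real.log (2 + G t) ^ 2) ∂μI := by
          apply integral_mono hi.abs (hMi.const_mul 4)
          intro t
          simp only [abs_of_nonneg (hG t)]
          exact le_four_mod (hG t)
      _ ≤ 4 * m := by rw [integral_const_mul]; linarith
  obtain ⟨hH, hHm⟩ := H_int hG hi hMi hM
  have c1 : Continuous fun x : ℝ => DD G (x + y * Complex.I) :=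
    line_cont fun x => (DD_diff hi (hz x)).continuousAt
  have c2 : Continuous fun x : ℝ => DD G (x + y * Complex.I) * Complex.log (DD G (x + y * Complex.I)) ^ 2 :=
    line_cont (F := fun z => DD G z * Complex.log (DD G z) ^ 2)
      fun x => (DL_diff hG hi (hz x)).continuousAt
  have hge : ∀ x : ℝ, 1 ≤ (DD G (x + y * Complex.I)).re := fun x => DD_re_ge hG hi (hz x)
  have c3 : Continuous fun x : ℝ => ‖DD G (x + y * Complex.I)‖ * Real.log ‖DD G (x + y * Complex.I)‖ := by
    refine c1.norm.mul (c1.norm.log fun x => ?_)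
    have := (hge x).trans (Complex.re_le_norm _)
    linarith
  have c4 : Continuous fun x : ℝ => th (DD G (x + y * Complex.I)).re :=
    th_cont.comp_continuous (Complex.continuous_re.comp c1) hge
  have hle : ∫ x in (-2 : ℝ)..2, ‖DD G (x + y * Complex.I)‖ * Real.log ‖DD G (x + y * Complex.I)‖ ≤
      ∫ x in (-2 : ℝ)..2, (th (DD G (x + y * Complex.I)).re -
        (DD G (x + y * Complex.I) * Complex.log (DD G (x + y * Complex.I)) ^ 2).re) := by
    apply intervalIntegral.integral_mono_on (by norm_num) (c3.intervalIntegrable _ _)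
      ((c4.sub (Complex.continuous_re.comp c2)).intervalIntegrable _ _)
    intro x _
    exact re_Dlog (hge x)
  have hre : ∫ x in (-2 : ℝ)..2, (DD G (x + y * Complex.I) * Complex.log (DD G (x + y * Complex.I)) ^ 2).re
      = (∫ x in (-2 : ℝ)..2, DD G (x + y * Complex.I) * Complex.log (DD G (x + y * Complex.I)) ^ 2).re :=
    Complex.reCLM.intervalIntegral_comp_comm (c2.intervalIntegrable _ _)
  have c5 : Continuous fun x : ℝ =>
      (DD G (x + y * Complex.I) * Complex.log (DD G (x + y * Complex.I)) ^ 2).re :=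
    Complex.continuous_re.comp c2
  rw [intervalIntegral.integral_sub (c4.intervalIntegrable _ _) (c5.intervalIntegrable _ _)] at hle
  rw [hre] at hle
  have hbot := bottom_bound hG hi hm1 hy hy1
  have hbot2 := (neg_le_abs _).trans ((Complex.abs_re_le_norm _).trans hbot)
  -- Jensen part
  obtain ⟨hc1, hc2⟩ := pois_conv (ind_int hH) hy
  have hcnn : ∀ x : ℝ, 0 ≤ ∫ t, (Set.Ioo (-1 : ℝ) 1).indicator
      (fun t => th (1 + Real.pi * G t) - th 1) t * pk y (t - x) := by
    intro x
    apply integral_nonneg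
    intro t
    apply mul_nonneg _ (pk_nonneg hy _)
    apply indicator_nonneg
    intro t _
    have h1 := th_tangent (le_refl (1 : ℝ)) (show 1 ≤ 1 + Real.pi * G t by
      have := mul_nonneg hpi.le (hG t); linarith)
    have h2 : 0 ≤ Real.log (2 * 1) := Real.log_nonneg (by norm_num)
    have h3 := mul_nonneg hpi.le (hG t)
    have h4 : 0 ≤ 4 * (Real.log (2 * 1) ^ 2 + 3 * Real.log (2 * 1) + 1) * (1 + Real.pi * G t - 1) := by
      apply mul_nonneg (by positivity); linarith
    linarith
  have hj : ∫ x in (-2 : ℝ)..2, (Real.pi * (th (DD G (x + y * Complex.I)).re - th 1)) ≤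
      (96 * (8 + 5 * m)) * Real.pi := by
    calc _ ≤ ∫ x in (-2 : ℝ)..2, ∫ t, (Set.Ioo (-1 : ℝ) 1).indicator
            (fun t => th (1 + Real.pi * G t) - th 1) t * pk y (t - x) := by
          apply intervalIntegral.integral_mono_on (by norm_num)
            ((continuous_const.mul (c4.sub continuous_const)).intervalIntegrable _ _)
            hc1.intervalIntegrable
          intro x _
          exact jensen hG hi hH x hy
      _ ≤ ∫ x, ∫ t, (Set.Ioo (-1 : ℝ) 1).indicator
            (fun t => th (1 + Real.pi * G t) - th 1) t * pk y (t - x) := by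
          rw [intervalIntegral.integral_of_le (by norm_num)]
          exact setIntegral_le_integral hc1 (Eventually.of_forall hcnn)
      _ = (∫ t, th (1 + Real.pi * G t) - th 1 ∂μI) * Real.pi := by
          rw [hc2, integral_indicator measurableSet_Ioo]; rfl
      _ ≤ _ := by gcongr
  rw [intervalIntegral.integral_const_mul, mul_comm] at hj
  have hj2 := le_of_mul_le_mul_right hj hpi
  rw [intervalIntegral.integral_sub (c4.intervalIntegrable _ _) (by simp),
    intervalIntegral.integral_const, smul_eq_mul] at hj2
  have := th_one
  unfold Bm
  linarith

lemma main_est {G : ℝ → ℝ} (hG : ∀ t, 0 ≤ G t) (hi : Integrable G μI)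
    (hMi : Integrable (fun t => G t * Real.log (2 + G t) ^ 2) μI) {m : ℝ}
    (hM : ∫ t, G t * Real.log (2 + G t) ^ 2 ∂μI ≤ m) {y : ℝ} (hy : 0 < y) (hy1 : y < 1) :
    ∫⁻ x, ENNReal.ofReal (‖DD G (x + y * Complex.I)‖ * Real.log ‖DD G (x + y * Complex.I)‖) ∂μI ≤
      ENNReal.ofReal (Bm m) := by
  have hz : ∀ x : ℝ, 0 < ((x : ℂ) + y * Complex.I).im := fun x => by rw [zim]; exact hy
  have hge : ∀ x : ℝ, 1 ≤ ‖DD G (x + y * Complex.I)‖ := by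
    intro x
    exact (DD_re_ge hG hi (hz x)).trans (Complex.re_le_norm _)
  have c1 : Continuous fun x : ℝ => DD G (x + y * Complex.I) :=
    line_cont fun x => (DD_diff hi (hz x)).continuousAt
  have c3 : Continuous fun x : ℝ => ‖DD G (x + y * Complex.I)‖ * Real.log ‖DD G (x + y * Complex.I)‖ := by
    refine c1.norm.mul (c1.norm.log fun x => ?_)
    linarith [hge x]
  have h := main_real hG hi hMi hM hy hy1
  refine le_trans ?_ (ENNReal.ofReal_le_ofReal h)
  rw [intervalIntegral.integral_of_le (by norm_num), ofReal_integral_eq_lintegral_ofReal]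
  · unfold μI
    apply lintegral_mono_set
    intro x hx
    exact ⟨by linarith [hx.1], by linarith [hx.2]⟩
  · exact (c3.intervalIntegrable (-2) 2).1
  · refine Eventually.of_forall fun x => ?_
    exact mul_nonneg (by linarith [hge x]) (Real.log_nonneg (hge x))

def ell (x : ℝ) : ℝ := 1 - Real.log (wt x)

lemma ell_ge {x : ℝ} : 1 ≤ ell x := by
  have := Real.log_nonpos (wt_nonneg x) (wt_le_one x)
  unfold ell; linarith

lemma ell_meas : Measurable ell := by
  unfold ell; exact measurable_const.sub (Real.measurable_log.comp wt_meas)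

lemma rpow_int {b : ℝ} (hb : 0 < b) (hb1 : b ≤ 1) :
    IntervalIntegrable (fun x : ℝ => (1 - x) ^ (b - 1)) volume (-1) 1 ∧
      ∫ x in (-1 : ℝ)..1, (1 - x) ^ (b - 1) ≤ 2 / b := by
  have h0 : IntervalIntegrable (fun x : ℝ => x ^ (b - 1)) volume 0 2 :=
    intervalIntegral.intervalIntegrable_rpow' (by linarith)
  constructor
  · have := h0.comp_sub_left 1
    norm_num at this
    exact this.symm
  · rw [intervalIntegral.integral_comp_sub_left (fun x : ℝ => x ^ (b - 1)) 1]
    norm_num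
    rw [integral_rpow (Or.inl (by linarith))]
    rw [sub_add_cancel, Real.zero_rpow hb.ne', sub_zero]
    gcongr
    calc (2 : ℝ) ^ b ≤ 2 ^ (1 : ℝ) := Real.rpow_le_rpow_of_exponent_le (by norm_num) hb1
      _ = 2 := Real.rpow_one 2

lemma rpow_lint {b : ℝ} (hb : 0 < b) (hb1 : b ≤ 1) :
    ∫⁻ x, ENNReal.ofReal ((1 - x) ^ (b - 1)) ∂μI ≤ ENNReal.ofReal (2 / b) := by
  obtain ⟨h1, h2⟩ := rpow_int hb hb1
  refine le_trans ?_ (ENNReal.ofReal_le_ofReal h2)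
  rw [intervalIntegral.integral_of_le (by norm_num), integral_Ioc_eq_integral_Ioo,
    ofReal_integral_eq_lintegral_ofReal]
  · rfl
  · exact h1.1.mono_set Ioo_subset_Ioc_self
  · filter_upwards [ae_restrict_mem measurableSet_Ioo] with x hx
    exact Real.rpow_nonneg (by linarith [hx.2]) _

lemma rpow_lint' {b : ℝ} (hb : 0 < b) (hb1 : b ≤ 1) :
    ∫⁻ x, ENNReal.ofReal ((1 + x) ^ (b - 1)) ∂μI ≤ ENNReal.ofReal (2 / b) := by
  refine le_trans (le_of_eq ?_) (rpow_lint hb hb1)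
  unfold μI
  rw [← lintegral_indicator measurableSet_Ioo, ← lintegral_indicator measurableSet_Ioo]
  rw [← lintegral_neg_eq_self]
  congr 1; ext x
  by_cases h : x ∈ Set.Ioo (-1 : ℝ) 1
  · have h' : -x ∈ Set.Ioo (-1 : ℝ) 1 := ⟨by linarith [h.2], by linarith [h.1]⟩
    rw [indicator_of_mem h, indicator_of_mem h']; rfl
  · have h' : -x ∉ Set.Ioo (-1 : ℝ) 1 := fun h' => h ⟨by linarith [h'.2], by linarith [h'.1]⟩
    rw [indicator_of_notMem h, indicator_of_notMem h']

lemma J_pt {t x : ℝ} (ht : t ∈ Set.Ioo (-1 : ℝ) 1) (hx : x ∈ Set.Ioo (-1 : ℝ) 1) :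
    2 * ell x * (wt x)⁻¹ * (wt t + wt x)⁻¹ ≤
      12 * ell t * ((1 - x) ^ ((ell t)⁻¹ / 4 - 1) + (1 + x) ^ ((ell t)⁻¹ / 4 - 1)) := by
  have hc := wt_pos ht
  have hw := wt_pos hx
  have hl : 1 ≤ ell t := ell_ge
  have hl0 : 0 < ell t := by linarith
  set a := (ell t)⁻¹ with ha
  have ha0 : 0 < a := inv_pos.2 hl0
  have ha1 : a ≤ 1 := inv_le_one_of_one_le₀ hl
  have hal : a * ell t = 1 := inv_mul_cancel₀ hl0.ne'
  set w := wt x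
  set c := wt t
  -- first factor
  have h1 : ell x ≤ 2 * ell t * w ^ (-(a / 2)) := by
    have e1 : 1 + a / 2 * (-Real.log w) ≤ w ^ (-(a / 2)) := by
      rw [Real.rpow_def_of_pos hw]
      have := Real.add_one_le_exp (Real.log w * (-(a / 2)))
      linarith
    have hlw : 0 ≤ -Real.log w := by
      have := Real.log_nonpos (wt_nonneg x) (wt_le_one x)
      linarith
    calc ell x = 1 + (-Real.log w) := by unfold ell; ring
      _ ≤ 2 * ell t + (a * ell t) * (-Real.log w) := by rw [hal]; linarith
      _ = 2 * ell t * (1 + a / 2 * (-Real.log w)) := by ring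
      _ ≤ _ := by gcongr
  -- second factor
  have h2 : (c + w)⁻¹ ≤ 3 * w ^ (a - 1) := by
    have g1 : c ^ a * w ^ (1 - a) ≤ c + w := by
      have := Real.geom_mean_le_arith_mean2_weighted ha0.le (by linarith : 0 ≤ 1 - a) hc.le hw.le
        (by ring)
      have h' : a * c ≤ 1 * c := by gcongr
      have h'' : (1 - a) * w ≤ 1 * w := by gcongr; linarith
      linarith
    have g2 : 1 / 3 ≤ c ^ a := by
      rw [Real.rpow_def_of_pos hc]
      have e2 : Real.log c * a = a - 1 := by
        have : ell t = 1 - Real.log c := rfl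
        rw [this] at hal; linarith
      rw [e2]
      have : Real.exp (-1) ≤ Real.exp (a - 1) := Real.exp_le_exp.2 (by linarith)
      refine le_trans ?_ this
      rw [Real.exp_neg, one_div]
      apply inv_anti₀ (Real.exp_pos 1)
      linarith [Real.exp_one_lt_d9]
    have g3 : w ^ (a - 1) = (w ^ (1 - a))⁻¹ := by
      rw [← Real.rpow_neg hw.le]; congr 1; ring
    have g4 : 0 < w ^ (1 - a) := Real.rpow_pos_of_pos hw _
    rw [g3, inv_le_iff_one_le_mul₀ (by positivity)]
    have : 1 / 3 * w ^ (1 - a) ≤ c + w := le_trans (by gcongr) g1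
    calc (1 : ℝ) = 3 * (w ^ (1 - a))⁻¹ * (1 / 3 * w ^ (1 - a)) := by field_simp
      _ ≤ _ := by gcongr
  have h3 : w ^ (-(a / 2)) * w⁻¹ * w ^ (a - 1) = (1 - x ^ 2) ^ (a / 4 - 1) := by
    rw [← wt_sq hx, ← Real.rpow_natCast, ← Real.rpow_mul (wt_nonneg x)]
    rw [← Real.rpow_neg_one w, ← Real.rpow_add hw, ← Real.rpow_add hw]
    congr 1; push_cast; ring
  have h4 : (1 - x ^ 2) ^ (a / 4 - 1) ≤ (1 - x) ^ (a / 4 - 1) + (1 + x) ^ (a / 4 - 1) := by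
    have hp1 : 0 < 1 - x := by linarith [hx.2]
    have hp2 : 0 < 1 + x := by linarith [hx.1]
    have q1 := Real.rpow_nonneg hp1.le (a / 4 - 1)
    have q2 := Real.rpow_nonneg hp2.le (a / 4 - 1)
    rcases le_or_gt 0 x with h | h
    · have := Real.rpow_le_rpow_of_nonpos hp1 (show 1 - x ≤ 1 - x ^ 2 by nlinarith)
        (show a / 4 - 1 ≤ 0 by linarith)
      linarith
    · have := Real.rpow_le_rpow_of_nonpos hp2 (show 1 + x ≤ 1 - x ^ 2 by nlinarith)
        (show a / 4 - 1 ≤ 0 by linarith)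
      linarith
  have hex : 1 ≤ ell x := ell_ge
  calc 2 * ell x * w⁻¹ * (c + w)⁻¹
      ≤ 2 * (2 * ell t * w ^ (-(a / 2))) * w⁻¹ * (3 * w ^ (a - 1)) := by
        have := Real.rpow_nonneg hw.le (-(a / 2))
        gcongr
    _ = 12 * ell t * (w ^ (-(a / 2)) * w⁻¹ * w ^ (a - 1)) := by ring
    _ ≤ _ := by rw [h3]; gcongr

lemma J_bound {t : ℝ} (ht : t ∈ Set.Ioo (-1 : ℝ) 1) :
    ∫⁻ x, ENNReal.ofReal (2 * ell x * (wt x)⁻¹ * (wt t + wt x)⁻¹) ∂μI ≤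
      ENNReal.ofReal (192 * ell t ^ 2) := by
  have hl : 1 ≤ ell t := ell_ge
  have hl0 : 0 < ell t := by linarith
  set b := (ell t)⁻¹ / 4 with hb
  have hb0 : 0 < b := by positivity
  have hb1 : b ≤ 1 := by
    have : (ell t)⁻¹ ≤ 1 := inv_le_one_of_one_le₀ hl
    linarith
  calc _ ≤ ∫⁻ x, ENNReal.ofReal (12 * ell t) * (ENNReal.ofReal ((1 - x) ^ (b - 1)) +
        ENNReal.ofReal ((1 + x) ^ (b - 1))) ∂μI := by
        apply lintegral_mono_ae
        filter_upwards [ae_I] with x hx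
        rw [← ENNReal.ofReal_add (Real.rpow_nonneg (by linarith [hx.2]) _)
          (Real.rpow_nonneg (by linarith [hx.1]) _), ← ENNReal.ofReal_mul (by positivity)]
        exact ENNReal.ofReal_le_ofReal (J_pt ht hx)
    _ = ENNReal.ofReal (12 * ell t) * (∫⁻ x, ENNReal.ofReal ((1 - x) ^ (b - 1)) ∂μI +
        ∫⁻ x, ENNReal.ofReal ((1 + x) ^ (b - 1)) ∂μI) := by
        rw [lintegral_const_mul _ (by fun_prop), lintegral_add_left (by fun_prop)]
    _ ≤ ENNReal.ofReal (12 * ell t) * (ENNReal.ofReal (2 / b) + ENNReal.ofReal (2 / b)) := by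
        gcongr
        · exact rpow_lint hb0 hb1
        · exact rpow_lint' hb0 hb1
    _ = _ := by
        rw [← ENNReal.ofReal_add (by positivity) (by positivity), ← ENNReal.ofReal_mul (by positivity)]
        congr 1
        rw [hb]; field_simp; norm_num

lemma ell_young {t : ℝ} (ht : t ∈ Set.Ioo (-1 : ℝ) 1) {G : ℝ} (hG : 0 ≤ G) :
    G * ell t ^ 2 ≤ 16 * (G * Real.log (2 + G) ^ 2) + 16 * (wt t)⁻¹ := by
  have hw := wt_pos ht
  have hl : 1 ≤ ell t := ell_ge
  set u := -Real.log (wt t) with hu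
  have hu0 : 0 ≤ u := by
    have := Real.log_nonpos (wt_nonneg t) (wt_le_one t); linarith
  have hlu : ell t = 1 + u := by unfold ell; rw [hu]; ring
  have hwu : (wt t)⁻¹ = Real.exp u := by rw [hu, Real.exp_neg, Real.exp_log hw]
  have hlam := log_half hG
  rcases le_or_gt G (Real.exp (u / 2)) with h | h
  · have h1 : ell t ≤ 4 * Real.exp (u / 4) := by
      have := Real.add_one_le_exp (u / 4); linarith
    have h2 : ell t ^ 2 ≤ 16 * Real.exp (u / 2) := by
      calc ell t ^ 2 ≤ (4 * Real.exp (u / 4)) ^ 2 := by gcongr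
        _ = 16 * (Real.exp (u / 4) * Real.exp (u / 4)) := by ring
        _ = _ := by rw [← Real.exp_add]; congr 2; ring
    have h3 : G * ell t ^ 2 ≤ Real.exp (u / 2) * (16 * Real.exp (u / 2)) := by gcongr
    have h4 : Real.exp (u / 2) * (16 * Real.exp (u / 2)) = 16 * (wt t)⁻¹ := by
      rw [hwu, mul_left_comm, ← Real.exp_add, add_halves]
    have : 0 ≤ 16 * (G * Real.log (2 + G) ^ 2) := by positivity
    linarith
  · have h1 : u / 2 ≤ Real.log (2 + G) := by
      rw [Real.le_log_iff_exp_le (by linarith)]; linarith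
    have h2 : ell t ≤ 4 * Real.log (2 + G) := by linarith
    have h3 : ell t ^ 2 ≤ 16 * Real.log (2 + G) ^ 2 := by nlinarith
    have h4 : G * ell t ^ 2 ≤ G * (16 * Real.log (2 + G) ^ 2) := by gcongr
    have : 0 ≤ 16 * (wt t)⁻¹ := by positivity
    linarith

def Phi (s : ℝ) : ℝ := s * Real.log (2 + s)
def Ps (s : ℝ) : ℝ := s * Real.log (2 + s) ^ 2
def BK (m : ℝ) : ℝ := (2 + 8 * m) * (192 * (16 * m + 64))

lemma Phi_mono {a b : ℝ} (ha : 0 ≤ a) (hab : a ≤ b) : Phi a ≤ Phi b := by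
  have := log_half ha
  have : Real.log (2 + a) ≤ Real.log (2 + b) := Real.log_le_log (by linarith) (by linarith)
  unfold Phi
  apply mul_le_mul hab this (by linarith) (by linarith)

lemma Ps_mono {a b : ℝ} (ha : 0 ≤ a) (hab : a ≤ b) : Ps a ≤ Ps b := by
  have := log_half ha
  have : Real.log (2 + a) ≤ Real.log (2 + b) := Real.log_le_log (by linarith) (by linarith)
  unfold Ps
  apply mul_le_mul hab _ (by positivity) (by linarith)
  gcongr

lemma Phi_nonneg {a : ℝ} (ha : 0 ≤ a) : 0 ≤ Phi a := by
  have := log_half ha; unfold Phi; positivity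

lemma Ps_nonneg {a : ℝ} (ha : 0 ≤ a) : 0 ≤ Ps a := by
  have := log_half ha; unfold Ps; positivity

lemma Phi_cont : ContinuousOn Phi (Set.Ici 0) := by
  unfold Phi
  refine continuousOn_id.mul (ContinuousOn.log (by fun_prop) ?_)
  intro x hx
  have : (0 : ℝ) ≤ x := hx
  linarith

lemma Phi_meas : Measurable Phi := by unfold Phi; fun_prop
lemma Ps_meas : Measurable Ps := by unfold Ps; fun_prop

lemma kf_nonneg (g : ℝ → ℝ) (x : ℝ) : 0 ≤ Kf g x := by
  unfold Kf
  have := wt_nonneg x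
  apply mul_nonneg (by positivity)
  apply integral_nonneg
  intro t
  have := wt_nonneg t
  positivity

lemma l1_of_mod {g : ℝ → ℝ} (hg : Integrable g μI) (hMi : Integrable (fun t => Ps |g t|) μI) {m : ℝ}
    (hM : ∫ t, Ps |g t| ∂μI ≤ m) : ∫ t, |g t| ∂μI ≤ 4 * m := by
  calc ∫ t, |g t| ∂μI ≤ ∫ t, 4 * Ps |g t| ∂μI := by
        apply integral_mono hg.abs (hMi.const_mul 4)
        intro t
        exact le_four_mod (abs_nonneg _)
    _ ≤ 4 * m := by rw [integral_const_mul]; linarith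

lemma K_pt {g : ℝ → ℝ} (hg : Integrable g μI) {m : ℝ}
    (hM : ∫ t, |g t| ∂μI ≤ 4 * m) {x : ℝ} (hx : x ∈ Set.Ioo (-1 : ℝ) 1) :
    Phi (Kf g x) ≤ (2 + 8 * m) * (ell x * Kf g x) := by
  have hw := wt_pos hx
  have hw1 := wt_le_one x
  have hm0 : 0 ≤ m := by
    have : 0 ≤ ∫ t, |g t| ∂μI := integral_nonneg fun _ => abs_nonneg _
    linarith
  have hK0 := kf_nonneg g x
  have hK : Kf g x ≤ 8 * m / wt x ^ 2 := by
    have h1 : ∫ t, |g t| / (wt t + wt x) ∂μI ≤ ∫ t, |g t| / wt x ∂μI := by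
      apply integral_mono (kf_int hg hx) (hg.abs.div_const _)
      intro t
      have := wt_nonneg t
      simp only
      gcongr
      linarith
    rw [integral_div] at h1
    unfold Kf
    calc _ ≤ 2 * (wt x)⁻¹ * (4 * m / wt x) := by
          gcongr
          exact h1.trans (by gcongr)
      _ = _ := by field_simp; ring
  have h2 : 2 + Kf g x ≤ (2 + 8 * m) / wt x ^ 2 := by
    have h1 : wt x ^ 2 ≤ 1 := by nlinarith
    have : 2 ≤ 2 / wt x ^ 2 := by rw [le_div_iff₀ (by positivity)]; linarith
    rw [add_div]; linarith
  have h3 : Real.log (2 + Kf g x) ≤ (2 + 8 * m) * ell x := by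
    have h4 := Real.log_le_log (by linarith) h2
    rw [Real.log_div (by positivity) (by positivity), Real.log_pow] at h4
    have h5 := Real.log_le_sub_one_of_pos (show 0 < 2 + 8 * m by positivity)
    have h6 := Real.log_nonpos (wt_nonneg x) (wt_le_one x)
    unfold ell
    push_cast at h4
    nlinarith
  unfold Phi
  calc _ ≤ Kf g x * ((2 + 8 * m) * ell x) := by gcongr
    _ = _ := by ring

lemma K_est {g : ℝ → ℝ} (hg : Integrable g μI) (hMi : Integrable (fun t => Ps |g t|) μI) {m : ℝ}
    (hM : ∫ t, Ps |g t| ∂μI ≤ m) :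
    ∫⁻ x, ENNReal.ofReal (Phi (Kf g x)) ∂μI ≤ ENNReal.ofReal (BK m) := by
  have h1 := l1_of_mod hg hMi hM
  have hm0 : 0 ≤ m := by
    have : 0 ≤ ∫ t, |g t| ∂μI := integral_nonneg fun _ => abs_nonneg _
    linarith
  have hgm : AEMeasurable g μI := hg.aemeasurable
  calc _ ≤ ∫⁻ x, ENNReal.ofReal (2 + 8 * m) * ∫⁻ t, ENNReal.ofReal
          (|g t| * (2 * ell x * (wt x)⁻¹ * (wt t + wt x)⁻¹)) ∂μI ∂μI := by
        apply lintegral_mono_ae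
        filter_upwards [ae_I] with x hx
        have hw := wt_pos hx
        have hl : 1 ≤ ell x := ell_ge
        refine (ENNReal.ofReal_le_ofReal (K_pt hg h1 hx)).trans (le_of_eq ?_)
        rw [ENNReal.ofReal_mul (by positivity)]
        congr 1
        rw [← ofReal_integral_eq_lintegral_ofReal]
        · congr 1
          unfold Kf
          rw [← mul_assoc, ← integral_const_mul]
          congr 1; ext t
          ring
        · have := (kf_int hg hx).const_mul (2 * ell x * (wt x)⁻¹)
          refine this.congr (Eventually.of_forall fun t => ?_)
          simp only; ring
        · refine Eventually.of_forall fun t => ?_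
          have := wt_nonneg t
          have hl : 1 ≤ ell x := ell_ge
          positivity
    _ = ENNReal.ofReal (2 + 8 * m) * ∫⁻ x, ∫⁻ t, ENNReal.ofReal
          (|g t| * (2 * ell x * (wt x)⁻¹ * (wt t + wt x)⁻¹)) ∂μI ∂μI := by
        rw [lintegral_const_mul' _ _ ENNReal.ofReal_ne_top]
    _ = ENNReal.ofReal (2 + 8 * m) * ∫⁻ t, ∫⁻ x, ENNReal.ofReal
          (|g t| * (2 * ell x * (wt x)⁻¹ * (wt t + wt x)⁻¹)) ∂μI ∂μI := by
        rw [lintegral_lintegral_swap]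
        have a1 : AEMeasurable (fun p : ℝ × ℝ => |g p.2|) (μI.prod μI) := by
          have : AEMeasurable (fun t => |g t|) μI := hgm.norm
          exact this.comp_snd
        have a2 : Measurable (fun p : ℝ × ℝ => 2 * ell p.1 * (wt p.1)⁻¹ * (wt p.2 + wt p.1)⁻¹) := by
          have := ell_meas
          have := wt_meas
          fun_prop
        exact (a1.mul a2.aemeasurable).ennreal_ofReal
    _ ≤ ENNReal.ofReal (2 + 8 * m) * ∫⁻ t, ENNReal.ofReal
          (192 * (16 * Ps |g t| + 16 * (wt t)⁻¹)) ∂μI := by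
        gcongr 1
        apply lintegral_mono_ae
        filter_upwards [ae_I] with t ht
        simp_rw [ENNReal.ofReal_mul (abs_nonneg (g t))]
        rw [lintegral_const_mul' _ _ ENNReal.ofReal_ne_top]
        refine (mul_le_mul_right (J_bound ht) _).trans ?_
        rw [← ENNReal.ofReal_mul (abs_nonneg _)]
        apply ENNReal.ofReal_le_ofReal
        have := ell_young ht (abs_nonneg (g t))
        unfold Ps
        linarith
    _ = ENNReal.ofReal (2 + 8 * m) * ENNReal.ofReal
          (192 * (16 * (∫ t, Ps |g t| ∂μI) + 16 * Real.pi)) := by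
        rw [← ofReal_integral_eq_lintegral_ofReal]
        · rw [integral_const_mul, integral_add (hMi.const_mul _) (wt_inv_int.const_mul _),
            integral_const_mul, integral_const_mul, int_wt_inv]
        · exact ((hMi.const_mul _).add (wt_inv_int.const_mul _)).const_mul _
        · refine Eventually.of_forall fun t => ?_
          have := wt_nonneg t
          have := Ps_nonneg (abs_nonneg (g t))
          positivity
    _ ≤ _ := by
        rw [← ENNReal.ofReal_mul (by positivity)]
        apply ENNReal.ofReal_le_ofReal
        have := Real.pi_lt_four
        unfold BK
        gcongr
        linarith

lemma Phi_r {r : ℝ} (hr : 1 ≤ r) : Phi (6 * r) ≤ 24 * (r * Real.log r) + 54 := by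
  have h1 : Real.log (2 + 6 * r) ≤ 3 + Real.log r := by
    have h8 : Real.log (2 + 6 * r) ≤ Real.log (8 * r) := Real.log_le_log (by linarith) (by linarith)
    rw [Real.log_mul (by norm_num) (by linarith), show (8 : ℝ) = 2 ^ 3 by norm_num, Real.log_pow] at h8
    have := Real.log_two_lt_d9
    push_cast at h8
    linarith
  have h0 : 0 ≤ Real.log r := Real.log_nonneg hr
  have h2 : r ≤ 3 + r * Real.log r := by
    rcases le_or_gt r 3 with h | h
    · have : 0 ≤ r * Real.log r := by positivity
      linarith
    · have : 1 ≤ Real.log r := by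
        rw [Real.le_log_iff_exp_le (by linarith)]
        linarith [Real.exp_one_lt_d9]
      nlinarith
  unfold Phi
  have : 6 * r * Real.log (2 + 6 * r) ≤ 6 * r * (3 + Real.log r) := by gcongr
  linarith

lemma Phi_3 {a : ℝ} (ha : 0 ≤ a) : Phi (3 * a) ≤ 15 * Phi a := by
  have h1 : Real.log (2 + 3 * a) ≤ Real.log 3 + Real.log (2 + a) := by
    rw [← Real.log_mul (by norm_num) (by linarith)]
    exact Real.log_le_log (by linarith) (by linarith)
  have h3 := Real.log_le_sub_one_of_pos (show (0 : ℝ) < 3 by norm_num)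
  have h4 := log_half ha
  unfold Phi
  have : 3 * a * Real.log (2 + 3 * a) ≤ 3 * a * (5 * Real.log (2 + a)) := by
    gcongr; linarith
  linarith

lemma Phi_add3 {a b c : ℝ} (ha : 0 ≤ a) (hb : 0 ≤ b) (hc : 0 ≤ c) :
    Phi (a + b + c) ≤ Phi (3 * a) + Phi (3 * b) + Phi (3 * c) := by
  have pa := Phi_nonneg (show 0 ≤ 3 * a by linarith)
  have pb := Phi_nonneg (show 0 ≤ 3 * b by linarith)
  have pc := Phi_nonneg (show 0 ≤ 3 * c by linarith)
  have h0 : 0 ≤ a + b + c := by linarith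
  rcases le_total a b with h1 | h1 <;> rcases le_total b c with h2 | h2 <;>
    rcases le_total a c with h3 | h3
  all_goals first
    | linarith [Phi_mono h0 (show a + b + c ≤ 3 * a by linarith)]
    | linarith [Phi_mono h0 (show a + b + c ≤ 3 * b by linarith)]
    | linarith [Phi_mono h0 (show a + b + c ≤ 3 * c by linarith)]

def Bf (m : ℝ) : ℝ := 24 * Bm m + 24 * Bm m + 15 * BK m + 216

lemma Bm_nonneg {m : ℝ} (hm : 0 ≤ m) : 0 ≤ Bm m := by unfold Bm; positivity
lemma BK_nonneg {m : ℝ} (hm : 0 ≤ m) : 0 ≤ BK m := by unfold BK; positivity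

lemma cau_le_DD {G : ℝ → ℝ} (hG : ∀ t, 0 ≤ G t) (hi : Integrable G μI) {z : ℂ}
    (hz : 0 < z.im) : ‖Cau G z‖ ≤ 2 * ‖DD G z‖ := by
  have h0 : 1 ≤ ‖DD G z‖ := (DD_re_ge hG hi hz).trans (Complex.re_le_norm _)
  have : ‖Complex.I * Cau G z‖ = ‖1 - DD G z‖ := by unfold DD; congr 1; ring
  rw [norm_mul, Complex.norm_I, one_mul] at this
  rw [this]
  refine (norm_sub_le _ _).trans ?_
  rw [norm_one]; linarith

lemma mod_part {g h : ℝ → ℝ} (hh : AEMeasurable h μI) (h0 : ∀ t, 0 ≤ h t) (hle : ∀ t, h t ≤ |g t|)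
    (hMi : Integrable (fun t => Ps |g t|) μI) {m : ℝ} (hM : ∫ t, Ps |g t| ∂μI ≤ m) :
    Integrable (fun t => h t * Real.log (2 + h t) ^ 2) μI ∧
      ∫ t, h t * Real.log (2 + h t) ^ 2 ∂μI ≤ m := by
  have hi : Integrable (fun t => Ps (h t)) μI := by
    refine hMi.mono' (Ps_meas.comp_aemeasurable hh).aestronglyMeasurable
      (Eventually.of_forall fun t => ?_)
    rw [Real.norm_of_nonneg (Ps_nonneg (h0 t))]
    exact Ps_mono (h0 t) (hle t)
  refine ⟨hi, le_trans ?_ hM⟩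
  apply integral_mono hi hMi
  intro t
  exact Ps_mono (h0 t) (hle t)

lemma y_est {g : ℝ → ℝ} (hg : Integrable g μI) (hMi : Integrable (fun t => Ps |g t|) μI) {m : ℝ}
    (hM : ∫ t, Ps |g t| ∂μI ≤ m) {y : ℝ} (hy : 0 < y) (hy1 : y < 1) :
    ∫⁻ x, ENNReal.ofReal (Phi |(wt x)⁻¹ * (Cau (fun t => wt t * g t) (x + y * Complex.I)).re|) ∂μI
      ≤ ENNReal.ofReal (Bf m) := by
  have hm0 : 0 ≤ m := (integral_nonneg fun t => Ps_nonneg (abs_nonneg (g t))).trans hM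
  have hz : ∀ x : ℝ, 0 < ((x : ℂ) + y * Complex.I).im := fun x => by rw [zim]; exact hy
  set gp : ℝ → ℝ := fun t => max (g t) 0 with hgp
  set gm : ℝ → ℝ := fun t => max (-g t) 0 with hgm
  have hgpi : Integrable gp μI := hg.pos_part
  have hgmi : Integrable gm μI := hg.neg_part
  have hp0 : ∀ t, 0 ≤ gp t := fun t => le_max_right _ _
  have hm0' : ∀ t, 0 ≤ gm t := fun t => le_max_right _ _
  obtain ⟨p1, p2⟩ := mod_part hgpi.aemeasurable hp0
    (fun t => max_le (le_abs_self _) (abs_nonneg _)) hMi hM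
  obtain ⟨q1, q2⟩ := mod_part hgmi.aemeasurable hm0'
    (fun t => max_le (neg_le_abs _) (abs_nonneg _)) hMi hM
  have hsplit : ∀ x : ℝ, Cau g (x + y * Complex.I) = Cau gp (x + y * Complex.I) -
      Cau gm (x + y * Complex.I) := by
    intro x
    rw [← cau_sub hgpi hgmi (hz x)]
    congr 1; ext t
    simp only [hgp, hgm]
    rcases le_total 0 (g t) with h | h
    · rw [max_eq_left h, max_eq_right (by linarith)]; ring
    · rw [max_eq_right h, max_eq_left (by linarith)]; ring
  have e1 := main_est hp0 hgpi p1 p2 hy hy1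
  have e2 := main_est hm0' hgmi q1 q2 hy hy1
  have e3 := K_est hg hMi hM
  have meas : ∀ {G : ℝ → ℝ}, Integrable G μI → Measurable fun x : ℝ =>
      ENNReal.ofReal (‖DD G (x + y * Complex.I)‖ * Real.log ‖DD G (x + y * Complex.I)‖) := by
    intro G hi
    have c1 : Continuous fun x : ℝ => DD G (x + y * Complex.I) :=
      line_cont fun x => (DD_diff hi (hz x)).continuousAt
    have := c1.measurable.norm
    fun_prop
  calc _ ≤ ∫⁻ x, (ENNReal.ofReal 24 * ENNReal.ofReal
            (‖DD gp (x + y * Complex.I)‖ * Real.log ‖DD gp (x + y * Complex.I)‖) +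
          (ENNReal.ofReal 24 * ENNReal.ofReal
            (‖DD gm (x + y * Complex.I)‖ * Real.log ‖DD gm (x + y * Complex.I)‖) +
          (ENNReal.ofReal 108 + ENNReal.ofReal 15 * ENNReal.ofReal (Phi (Kf g x))))) ∂μI := by
        apply lintegral_mono_ae
        filter_upwards [ae_I] with x hx
        have r1 : 1 ≤ ‖DD gp (x + y * Complex.I)‖ :=
          (DD_re_ge hp0 hgpi (hz x)).trans (Complex.re_le_norm _)
        have r2 : 1 ≤ ‖DD gm (x + y * Complex.I)‖ :=
          (DD_re_ge hm0' hgmi (hz x)).trans (Complex.re_le_norm _)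
        have hb := re_bound hg hx hy
        rw [hsplit] at hb
        have hb2 := norm_sub_le (Cau gp (x + y * Complex.I)) (Cau gm (x + y * Complex.I))
        have c1 := cau_le_DD hp0 hgpi (hz x)
        have c2 := cau_le_DD hm0' hgmi (hz x)
        have hK := kf_nonneg g x
        set a := ‖DD gp (x + y * Complex.I)‖
        set b := ‖DD gm (x + y * Complex.I)‖
        have l1 := Real.log_nonneg r1
        have l2 := Real.log_nonneg r2
        have pK := Phi_nonneg hK
        rw [← ENNReal.ofReal_mul (by norm_num), ← ENNReal.ofReal_mul (by norm_num),
          ← ENNReal.ofReal_mul (by norm_num), ← ENNReal.ofReal_add (by norm_num) (by positivity),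
          ← ENNReal.ofReal_add (by positivity) (by positivity),
          ← ENNReal.ofReal_add (by positivity) (by positivity)]
        apply ENNReal.ofReal_le_ofReal
        have h1 : Phi |(wt x)⁻¹ * (Cau (fun t => wt t * g t) (x + y * Complex.I)).re| ≤
            Phi (2 * a + 2 * b + Kf g x) := Phi_mono (abs_nonneg _) (by linarith)
        have h2 := Phi_add3 (show 0 ≤ 2 * a by linarith) (show 0 ≤ 2 * b by linarith) hK
        have h3 := Phi_r r1
        have h4 := Phi_r r2
        have h5 := Phi_3 hK
        rw [show 3 * (2 * a) = 6 * a by ring, show 3 * (2 * b) = 6 * b by ring] at h2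
        linarith
    _ ≤ ENNReal.ofReal 24 * ENNReal.ofReal (Bm m) + (ENNReal.ofReal 24 * ENNReal.ofReal (Bm m) +
          (ENNReal.ofReal 216 + ENNReal.ofReal 15 * ENNReal.ofReal (BK m))) := by
        rw [lintegral_add_left ((meas hgpi).const_mul _), lintegral_add_left ((meas hgmi).const_mul _),
          lintegral_add_left measurable_const, lintegral_const_mul _ (meas hgpi),
          lintegral_const_mul _ (meas hgmi), lintegral_const_mul' _ _ ENNReal.ofReal_ne_top]
        gcongr
        rw [lintegral_const]
        unfold μI
        rw [Measure.restrict_apply_univ, Real.volume_Ioo, ← ENNReal.ofReal_mul (by norm_num)]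
        norm_num
    _ = _ := by
        have := Bm_nonneg hm0
        have := BK_nonneg hm0
        rw [← ENNReal.ofReal_mul (by norm_num), ← ENNReal.ofReal_mul (by norm_num),
          ← ENNReal.ofReal_add (by norm_num) (by positivity),
          ← ENNReal.ofReal_add (by positivity) (by positivity),
          ← ENNReal.ofReal_add (by positivity) (by positivity)]
        congr 1
        unfold Bf; ring

theorem rel_est {f g : ℝ → ℝ} (hf : Integrable f μI) (hg : Integrable g μI) (h : HRel f g)
    (hMi : Integrable (fun t => Ps |g t|) μI) {m : ℝ} (hM : ∫ t, Ps |g t| ∂μI ≤ m) :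
    ∫⁻ x, ENNReal.ofReal (Phi |f x|) ∂μI ≤ ENNReal.ofReal (Bf m) := by
  set yn : ℕ → ℝ := fun n => 1 / ((n : ℝ) + 2) with hyn
  have hy0 : ∀ n, 0 < yn n := fun n => by simp only [hyn]; positivity
  have hy1 : ∀ n, yn n < 1 := fun n => by
    simp only [hyn]
    rw [div_lt_one (by positivity)]
    have : (0 : ℝ) ≤ n := Nat.cast_nonneg n
    linarith
  have hyt : Tendsto yn atTop (𝓝[>] 0) := by
    apply tendsto_nhdsWithin_of_tendsto_nhds_of_eventually_within
    · have := tendsto_one_div_add_atTop_nhds_zero_nat (𝕜 := ℝ)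
      have h2 := (tendsto_add_atTop_iff_nat 1).2 this
      refine h2.congr fun n => ?_
      simp only [hyn]; push_cast; ring
    · exact Eventually.of_forall hy0
  set D : ℕ → ℝ → ℝ := fun n x =>
    (wt x)⁻¹ * (Cau (fun t => wt t * g t) (x + yn n * Complex.I)).re with hD
  have hDm : ∀ n, Measurable (D n) := by
    intro n
    have c1 : Continuous fun x : ℝ => Cau (fun t => wt t * g t) (x + yn n * Complex.I) :=
      line_cont fun x => (cau_hasDerivAt (wt_mul_int hg) (by rw [zim]; exact hy0 n)).continuousAt
    exact wt_meas.inv.mul (Complex.measurable_re.comp c1.measurable)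
  calc _ ≤ ∫⁻ x, liminf (fun n => ENNReal.ofReal (Phi |D n x|)) atTop ∂μI := by
        apply lintegral_mono_ae
        filter_upwards [rel_re hf hg h] with x hx
        have h1 : Tendsto (fun n => D n x) atTop (𝓝 (-(Real.pi * f x))) := hx.comp hyt
        have h2 : Tendsto (fun n => Phi |D n x|) atTop (𝓝 (Phi |-(Real.pi * f x)|)) := by
          have hc := (Phi_cont |-(Real.pi * f x)| (Set.mem_Ici.2 (abs_nonneg _)))
          refine hc.tendsto.comp ?_
          apply tendsto_nhdsWithin_of_tendsto_nhds_of_eventually_within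
          · exact h1.abs
          · exact Eventually.of_forall fun n => Set.mem_Ici.2 (abs_nonneg _)
        have h3 := (ENNReal.tendsto_ofReal h2).liminf_eq
        rw [h3]
        apply ENNReal.ofReal_le_ofReal
        apply Phi_mono (abs_nonneg _)
        rw [abs_neg, abs_mul, abs_of_pos Real.pi_pos]
        have := Real.pi_gt_three
        have := abs_nonneg (f x)
        nlinarith
    _ ≤ liminf (fun n => ∫⁻ x, ENNReal.ofReal (Phi |D n x|) ∂μI) atTop :=
        lintegral_liminf_le fun n => (Phi_meas.comp (hDm n).norm).ennreal_ofReal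
    _ ≤ liminf (fun _ : ℕ => ENNReal.ofReal (Bf m)) atTop :=
        liminf_le_liminf (Eventually.of_forall fun n => y_est hg hMi hM (hy0 n) (hy1 n))
    _ = _ := liminf_const _

theorem rel_l1 {f g : ℝ → ℝ} (hf : Integrable f μI) (hg : Integrable g μI) (h : HRel f g)
    (hMi : Integrable (fun t => Ps |g t|) μI) {m : ℝ} (hM : ∫ t, Ps |g t| ∂μI ≤ m) :
    ∫ t, |f t| ∂μI ≤ 2 * Bf m := by
  have hm0 : 0 ≤ m := (integral_nonneg fun t => Ps_nonneg (abs_nonneg (g t))).trans hM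
  have hB : 0 ≤ Bf m := by
    have := Bm_nonneg hm0
    have := BK_nonneg hm0
    unfold Bf; positivity
  have h1 := rel_est hf hg h hMi hM
  rw [integral_eq_lintegral_of_nonneg_ae (Eventually.of_forall fun _ => abs_nonneg _)
    hf.abs.aestronglyMeasurable]
  apply ENNReal.toReal_le_of_le_ofReal (by positivity)
  calc _ ≤ ∫⁻ t, ENNReal.ofReal 2 * ENNReal.ofReal (Phi |f t|) ∂μI := by
        apply lintegral_mono
        intro t
        show ENNReal.ofReal |f t| ≤ ENNReal.ofReal 2 * ENNReal.ofReal (Phi |f t|)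
        rw [← ENNReal.ofReal_mul (by norm_num)]
        apply ENNReal.ofReal_le_ofReal
        have := log_half (abs_nonneg (f t))
        have := abs_nonneg (f t)
        unfold Phi
        nlinarith
    _ ≤ ENNReal.ofReal 2 * ENNReal.ofReal (Bf m) := by
        rw [lintegral_const_mul' _ _ ENNReal.ofReal_ne_top]
        gcongr
    _ = _ := by rw [← ENNReal.ofReal_mul (by norm_num)]

instance : IsFiniteMeasure μI := by unfold μI; infer_instance
instance : μI.Regular := by unfold μI; infer_instance

lemma Ps_scale {l a : ℝ} (hl : 1 ≤ l) (ha : 0 ≤ a) :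
    Ps (l * a) ≤ l * (2 * Real.log l + 1) ^ 2 * Ps a := by
  have h1 := log_half ha
  have h0 : 0 ≤ Real.log l := Real.log_nonneg hl
  have h2 : Real.log (2 + l * a) ≤ (2 * Real.log l + 1) * Real.log (2 + a) := by
    calc _ ≤ Real.log (l * (2 + a)) := Real.log_le_log (by positivity) (by nlinarith)
      _ = Real.log l + Real.log (2 + a) := Real.log_mul (by positivity) (by positivity)
      _ ≤ _ := by nlinarith
  have h3 : 0 ≤ Real.log (2 + l * a) := by have := log_half (a := l * a) (by positivity); linarith
  have h4 := pow_le_pow_left₀ h3 h2 2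
  unfold Ps
  calc _ ≤ l * a * ((2 * Real.log l + 1) * Real.log (2 + a)) ^ 2 := by gcongr
    _ = _ := by ring

lemma Ps_add {a b c : ℝ} (ha : 0 ≤ a) (hb : 0 ≤ b) (hc : 0 ≤ c) (h : c ≤ a + b) :
    Ps c ≤ Ps (2 * a) + Ps (2 * b) := by
  have h1 := Ps_nonneg (a := 2 * a) (by positivity)
  have h2 := Ps_nonneg (a := 2 * b) (by positivity)
  rcases le_total a b with hab | hab
  · have := Ps_mono hc (show c ≤ 2 * b by linarith); linarith
  · have := Ps_mono hc (show c ≤ 2 * a by linarith); linarith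

lemma Ps_int_scale {g : ℝ → ℝ} (hg : AEStronglyMeasurable g μI)
    (hMi : Integrable (fun t => Ps |g t|) μI) {l : ℝ} (hl : 1 ≤ l) :
    Integrable (fun t => Ps (l * |g t|)) μI := by
  refine (hMi.const_mul (l * (2 * Real.log l + 1) ^ 2)).mono'
    (Ps_meas.comp_aemeasurable (hg.aemeasurable.norm.const_mul l)).aestronglyMeasurable ?_
  filter_upwards with t
  rw [Real.norm_eq_abs, abs_of_nonneg (Ps_nonneg (by positivity))]
  exact Ps_scale hl (abs_nonneg _)

lemma int_of_mod {g : ℝ → ℝ} (hg : AEStronglyMeasurable g μI)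
    (hMi : Integrable (fun t => Ps |g t|) μI) : Integrable g μI := by
  refine (hMi.const_mul 4).mono' hg ?_
  filter_upwards with t
  exact le_four_mod (abs_nonneg (g t))

/-- truncation -/
lemma trunc_approx {g : ℝ → ℝ} (hg : AEStronglyMeasurable g μI)
    (hMi : Integrable (fun t => Ps |g t|) μI) {l : ℝ} (hl : 1 ≤ l) :
    ∃ (M : ℝ) (k : ℝ → ℝ), 0 ≤ M ∧ Integrable k μI ∧ (∀ t, |k t| ≤ M) ∧
      Integrable (fun t => Ps (l * |g t - k t|)) μI ∧ ∫ t, Ps (l * |g t - k t|) ∂μI ≤ 1 / 2 := by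
  set k : ℕ → ℝ → ℝ := fun n t => if |g t| ≤ n then g t else 0 with hk
  have hgm := hg.aemeasurable
  have kk : ∀ n, ∀ t, |g t - k n t| ≤ |g t| := by
    intro n t
    simp only [hk]
    split_ifs <;> simp
  have km : ∀ n, AEMeasurable (k n) μI := by
    intro n
    have : Measurable fun s : ℝ => if |s| ≤ (n : ℝ) then s else 0 :=
      Measurable.ite (measurableSet_le (by fun_prop) (by fun_prop)) measurable_id measurable_const
    exact this.comp_aemeasurable hgm
  have mm : ∀ n, AEStronglyMeasurable (fun t => Ps (l * |g t - k n t|)) μI := fun n =>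
    (Ps_meas.comp_aemeasurable ((hgm.sub (km n)).norm.const_mul l)).aestronglyMeasurable
  have bb : ∀ n, ∀ᵐ t ∂μI, ‖Ps (l * |g t - k n t|)‖ ≤ Ps (l * |g t|) := by
    intro n
    filter_upwards with t
    rw [Real.norm_eq_abs, abs_of_nonneg (Ps_nonneg (by positivity))]
    exact Ps_mono (by positivity) (by have := kk n t; gcongr)
  have T : Tendsto (fun n => ∫ t, Ps (l * |g t - k n t|) ∂μI) atTop (𝓝 (∫ t, (0 : ℝ) ∂μI)) := by
    refine tendsto_integral_of_dominated_convergence _ mm (Ps_int_scale hg hMi hl) bb ?_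
    filter_upwards with t
    apply tendsto_const_nhds.congr'
    obtain ⟨N, hN⟩ := exists_nat_ge |g t|
    filter_upwards [eventually_ge_atTop N] with n hn
    have : |g t| ≤ n := hN.trans (by exact_mod_cast hn)
    simp [hk, this, Ps]
  rw [integral_zero] at T
  obtain ⟨n, hn⟩ := (T.eventually (ge_mem_nhds (show (0 : ℝ) < 1 / 2 by norm_num))).exists
  have kb : ∀ t, |k n t| ≤ n := by
    intro t
    simp only [hk]
    split_ifs with h
    · exact h
    · simp
  refine ⟨n, k n, by positivity, ?_, kb, ?_, hn⟩
  · exact (integrable_const (n : ℝ)).mono' (km n).aestronglyMeasurable (Eventually.of_forall kb)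
  · exact (Ps_int_scale hg hMi hl).mono' (mm n) (bb n)

lemma bdd_approx {k : ℝ → ℝ} (hk : Integrable k μI) {M : ℝ} (hM : 0 ≤ M) (hkM : ∀ t, |k t| ≤ M)
    {l : ℝ} (hl : 1 ≤ l) : ∃ p : Polynomial ℝ,
      Integrable (fun t => Ps (l * |k t - p.eval t|)) μI ∧
      ∫ t, Ps (l * |k t - p.eval t|) ∂μI ≤ 1 / 2 := by
  set K : ℝ := l * Real.log (2 + l * (2 * M + 1)) ^ 2 with hK
  have hK0 : 0 ≤ K := by positivity
  set δ : ℝ := 1 / (6 * (K + 1)) with hδ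
  have hδ0 : 0 < δ := by positivity
  have hδ1 : δ ≤ 1 := by rw [hδ, div_le_one (by positivity)]; linarith
  obtain ⟨φ, -, h1, hφc, hφi⟩ := hk.exists_hasCompactSupport_integral_sub_le hδ0
  set ψ : ℝ → ℝ := fun t => max (-M) (min M (φ t)) with hψ
  have hψc : Continuous ψ := by simp only [hψ]; fun_prop
  obtain ⟨p, hp⟩ := exists_polynomial_near_of_continuousOn (-1) 1 ψ hψc.continuousOn δ hδ0
  have e1 : ∀ t, |k t - ψ t| ≤ |k t - φ t| := by
    intro t
    have h := abs_le.1 (hkM t)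
    simp only [hψ]
    rcases le_total M (φ t) with a | a
    · rw [min_eq_left a, max_eq_right (by linarith), abs_of_nonpos (by linarith),
        abs_of_nonpos (by linarith)]; linarith
    · rw [min_eq_right a]
      rcases le_total (-M) (φ t) with b | b
      · rw [max_eq_right b]
      · rw [max_eq_left b, abs_of_nonneg (by linarith), abs_of_nonneg (by linarith)]; linarith
  have e2 : ∀ t, |ψ t| ≤ M := by
    intro t
    rw [abs_le]
    exact ⟨le_max_left _ _, max_le (by linarith) (min_le_left _ _)⟩
  have e3 : ∀ᵐ t ∂μI, |k t - p.eval t| ≤ |k t - φ t| + δ ∧ |k t - p.eval t| ≤ 2 * M + 1 := by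
    filter_upwards [ae_I] with t ht
    have := hp t ⟨ht.1.le, ht.2.le⟩
    rw [abs_sub_comm] at this
    have a1 := abs_sub_le (k t) (ψ t) (p.eval t)
    have a2 := abs_sub (k t) (ψ t)
    have := e1 t; have := e2 t; have := hkM t
    constructor <;> linarith
  have e4 : ∀ᵐ t ∂μI, Ps (l * |k t - p.eval t|) ≤ K * (|k t - φ t| + δ) := by
    filter_upwards [e3] with t ht
    have h3 : 0 ≤ Real.log (2 + l * |k t - p.eval t|) := by
      have := log_half (a := l * |k t - p.eval t|) (by positivity); linarith
    have h4 : Real.log (2 + l * |k t - p.eval t|) ≤ Real.log (2 + l * (2 * M + 1)) :=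
      Real.log_le_log (by positivity) (by have := ht.2; gcongr)
    have h5 := pow_le_pow_left₀ h3 h4 2
    unfold Ps
    calc _ ≤ l * (|k t - φ t| + δ) * Real.log (2 + l * (2 * M + 1)) ^ 2 := by
          have := ht.1; gcongr
      _ = _ := by rw [hK]; ring
  have i1 : Integrable (fun t => |k t - φ t|) μI := (hk.sub hφi).abs
  have i2 : Integrable (fun t => K * (|k t - φ t| + δ)) μI :=
    (i1.add (integrable_const δ)).const_mul K
  have i3 : Integrable (fun t => Ps (l * |k t - p.eval t|)) μI := by
    refine i2.mono' (Ps_meas.comp_aemeasurable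
      ((hk.sub (poly_int p)).aestronglyMeasurable.aemeasurable.norm.const_mul l)).aestronglyMeasurable ?_
    filter_upwards [e4] with t ht
    rwa [Real.norm_eq_abs, abs_of_nonneg (Ps_nonneg (by positivity))]
  refine ⟨p, i3, (integral_mono_ae i3 i2 e4).trans ?_⟩
  have v : ∫ _t : ℝ, δ ∂μI = 2 * δ := by
    have := integral_const_mul (μ := μI) δ (fun _ : ℝ => (1 : ℝ))
    rw [vol_I] at this
    simp only [mul_one] at this
    rw [this]; ring
  rw [integral_const_mul, integral_add i1 (integrable_const δ), v]
  have h1' : ∫ t, |k t - φ t| ∂μI ≤ δ := h1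
  calc _ ≤ K * (3 * δ) := by gcongr; linarith
    _ ≤ (K + 1) * (3 * δ) := by gcongr; linarith
    _ = 1 / 2 := by rw [hδ]; field_simp; norm_num

lemma poly_approx {g : ℝ → ℝ} (hg : AEStronglyMeasurable g μI)
    (hMi : Integrable (fun t => Ps |g t|) μI) {l : ℝ} (hl : 1 ≤ l) : ∃ p : Polynomial ℝ,
      Integrable (fun t => Ps (l * |g t - p.eval t|)) μI ∧
      ∫ t, Ps (l * |g t - p.eval t|) ∂μI ≤ 1 := by
  obtain ⟨M, k, hM, hk, hkM, i1, b1⟩ := trunc_approx hg hMi (l := 2 * l) (by linarith)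
  obtain ⟨p, i2, b2⟩ := bdd_approx hk hM hkM (l := 2 * l) (by linarith)
  have e : ∀ t, Ps (l * |g t - p.eval t|) ≤
      Ps (2 * l * |g t - k t|) + Ps (2 * l * |k t - p.eval t|) := by
    intro t
    rw [mul_assoc, mul_assoc]
    apply Ps_add (by positivity) (by positivity) (by positivity)
    rw [← mul_add]
    have := abs_sub_le (g t) (k t) (p.eval t)
    gcongr
  have i3 : Integrable (fun t => Ps (l * |g t - p.eval t|)) μI := by
    refine (i1.add i2).mono' (Ps_meas.comp_aemeasurable
      ((hg.sub (poly_int p).aestronglyMeasurable).aemeasurable.norm.const_mul l)).aestronglyMeasurable ?_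
    filter_upwards with t
    rw [Real.norm_eq_abs, abs_of_nonneg (Ps_nonneg (by positivity))]
    exact e t
  refine ⟨p, i3, (integral_mono i3 (i1.add i2) e).trans ?_⟩
  have := integral_add i1 i2
  simp only [Pi.add_apply]
  linarith

lemma l1_lim {f : ℕ → ℝ → ℝ} (hf : ∀ n, Integrable (f n) μI) {C : ℝ}
    (h : ∀ N n m : ℕ, N ≤ n → N ≤ m → ∫ t, |f n t - f m t| ∂μI ≤ C * (1 / 2) ^ N) :
    ∃ F : ℝ → ℝ, Integrable F μI ∧ Tendsto (fun n => ∫ t, |F t - f n t| ∂μI) atTop (𝓝 0) := by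
  have T : Tendsto (fun N : ℕ => C * (1 / 2 : ℝ) ^ N) atTop (𝓝 0) := by
    simpa using (tendsto_pow_atTop_nhds_zero_of_lt_one (r := (1 / 2 : ℝ)) (by norm_num)
      (by norm_num)).const_mul C
  set u : ℕ → (ℝ →₁[μI] ℝ) := fun n => (hf n).toL1 (f n) with hu
  have hd : ∀ a b : ℝ →₁[μI] ℝ, dist a b = ∫ t, |a t - b t| ∂μI := by
    intro a b
    rw [dist_eq_norm, L1.norm_eq_integral_norm]
    apply integral_congr_ae
    filter_upwards [Lp.coeFn_sub a b] with t ht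
    rw [ht]; rfl
  have hc : CauchySeq u := by
    apply cauchySeq_of_le_tendsto_0 _ _ T
    intro n m N hn hm
    rw [hd]
    refine le_trans (le_of_eq ?_) (h N n m hn hm)
    apply integral_congr_ae
    filter_upwards [(hf n).coeFn_toL1, (hf m).coeFn_toL1] with t h1 h2
    rw [hu]; simp only [h1, h2]
  obtain ⟨F, hF⟩ := cauchySeq_tendsto_of_complete hc
  refine ⟨F, L1.integrable_coeFn F, ?_⟩
  have := tendsto_iff_dist_tendsto_zero.1 hF
  refine this.congr fun n => ?_
  rw [dist_comm, hd]
  apply integral_congr_ae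
  filter_upwards [(hf n).coeFn_toL1] with t h1
  rw [hu]; simp only [h1]

lemma cau_lim {f : ℕ → ℝ → ℝ} {F : ℝ → ℝ} (hf : ∀ n, Integrable (f n) μI) (hF : Integrable F μI)
    (h : Tendsto (fun n => ∫ t, |F t - f n t| ∂μI) atTop (𝓝 0)) {z : ℂ} (hz : 0 < z.im) :
    Tendsto (fun n => Cau (f n) z) atTop (𝓝 (Cau F z)) := by
  rw [tendsto_iff_norm_sub_tendsto_zero]
  have h1 := h.div_const z.im
  rw [zero_div] at h1
  refine squeeze_zero (fun _ => norm_nonneg _) (fun n => ?_) h1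
  rw [norm_sub_rev, ← cau_sub hF (hf n) hz]
  exact cau_norm_le_im (hF.sub (hf n)) hz

theorem real_exists {g : ℝ → ℝ} (hgm : AEStronglyMeasurable g μI)
    (hMi : Integrable (fun t => Ps |g t|) μI) : ∃ f : ℝ → ℝ, Integrable f μI ∧
      Integrable (fun t => Phi |f t|) μI ∧ ∀ᵐ x : ℝ ∂μI,
        Tendsto (fun y => PV f y x) (𝓝[>] 0) (𝓝 (Real.pi * g x)) := by
  have hg := int_of_mod hgm hMi
  have hl : ∀ n : ℕ, (1 : ℝ) ≤ 2 * 2 ^ n := fun n => by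
    have : (1 : ℝ) ≤ 2 ^ n := one_le_pow₀ (by norm_num)
    linarith
  choose p hpi hpb using fun n : ℕ => poly_approx hgm hMi (hl n)
  choose f hfi hfr using fun n => rel_poly (p n)
  have key : ∀ N n m : ℕ, N ≤ n → N ≤ m →
      ∫ t, |f n t - f m t| ∂μI ≤ (2 * Bf 2) * (1 / 2) ^ N := by
    intro N n m hn hm
    have r := rel_smul (2 ^ N) (rel_sub (hfi n) (poly_int (p n)) (hfi m) (poly_int (p m))
      (hfr n) (hfr m))
    have ig : Integrable (fun t => 2 ^ N * ((p n).eval t - (p m).eval t)) μI :=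
      ((poly_int (p n)).sub (poly_int (p m))).const_mul _
    have if' : Integrable (fun t => 2 ^ N * (f n t - f m t)) μI :=
      ((hfi n).sub (hfi m)).const_mul _
    have e : ∀ t, Ps |2 ^ N * ((p n).eval t - (p m).eval t)| ≤
        Ps (2 * 2 ^ n * |g t - (p n).eval t|) + Ps (2 * 2 ^ m * |g t - (p m).eval t|) := by
      intro t
      rw [mul_assoc, mul_assoc, abs_mul, abs_of_pos (show (0 : ℝ) < 2 ^ N by positivity)]
      apply Ps_add (by positivity) (by positivity) (by positivity)
      have a1 : (2 : ℝ) ^ N ≤ 2 ^ n := pow_le_pow_right₀ (by norm_num) hn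
      have a2 : (2 : ℝ) ^ N ≤ 2 ^ m := pow_le_pow_right₀ (by norm_num) hm
      have a3 := abs_sub_le ((p n).eval t) (g t) ((p m).eval t)
      rw [abs_sub_comm ((p n).eval t) (g t)] at a3
      calc _ ≤ 2 ^ N * (|g t - (p n).eval t| + |g t - (p m).eval t|) := by gcongr
        _ = 2 ^ N * |g t - (p n).eval t| + 2 ^ N * |g t - (p m).eval t| := by ring
        _ ≤ _ := by gcongr
    have iP : Integrable (fun t => Ps |2 ^ N * ((p n).eval t - (p m).eval t)|) μI := by
      refine ((hpi n).add (hpi m)).mono' (Ps_meas.comp_aemeasurable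
        ig.aestronglyMeasurable.aemeasurable.norm).aestronglyMeasurable ?_
      filter_upwards with t
      rw [Real.norm_eq_abs, abs_of_nonneg (Ps_nonneg (abs_nonneg _))]
      exact e t
    have bP : ∫ t, Ps |2 ^ N * ((p n).eval t - (p m).eval t)| ∂μI ≤ 2 := by
      refine (integral_mono iP ((hpi n).add (hpi m)) e).trans ?_
      have := integral_add (hpi n) (hpi m)
      have := hpb n
      have := hpb m
      simp only [Pi.add_apply]
      linarith
    have := rel_l1 if' ig r iP bP
    simp only [abs_mul, abs_of_pos (show (0 : ℝ) < 2 ^ N by positivity)] at this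
    rw [integral_const_mul] at this
    rw [one_div, inv_pow, ← div_eq_mul_inv, le_div_iff₀ (by positivity)]
    linarith
  obtain ⟨F, hFi, hFt⟩ := l1_lim hfi key
  have gl : Tendsto (fun n => ∫ t, |g t - (p n).eval t| ∂μI) atTop (𝓝 0) := by
    have T : Tendsto (fun N : ℕ => 2 * (1 / 2 : ℝ) ^ N) atTop (𝓝 0) := by
      simpa using (tendsto_pow_atTop_nhds_zero_of_lt_one (r := (1 / 2 : ℝ)) (by norm_num)
        (by norm_num)).const_mul 2
    refine squeeze_zero (fun _ => integral_nonneg fun _ => abs_nonneg _) (fun n => ?_) T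
    have i1 : Integrable (fun t => |g t - (p n).eval t|) μI := (hg.sub (poly_int (p n))).abs
    have : ∫ t, (2 * 2 ^ n) * |g t - (p n).eval t| ∂μI ≤
        ∫ t, 4 * Ps (2 * 2 ^ n * |g t - (p n).eval t|) ∂μI :=
      integral_mono (i1.const_mul _) ((hpi n).const_mul _) fun t => le_four_mod (by positivity)
    rw [integral_const_mul, integral_const_mul] at this
    have := hpb n
    rw [one_div, inv_pow, ← div_eq_mul_inv, le_div_iff₀ (by positivity)]
    linarith
  have wl : Tendsto (fun n => ∫ t, |wt t * g t - wt t * (p n).eval t| ∂μI) atTop (𝓝 0) := by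
    refine squeeze_zero (fun _ => integral_nonneg fun _ => abs_nonneg _) (fun n => ?_) gl
    refine integral_mono ((wt_mul_int hg).sub (wt_mul_int (poly_int (p n)))).abs
      (hg.sub (poly_int (p n))).abs fun t => ?_
    show |wt t * g t - wt t * (p n).eval t| ≤ |g t - (p n).eval t|
    rw [← mul_sub, abs_mul, abs_of_nonneg (wt_nonneg t)]
    exact mul_le_of_le_one_left (abs_nonneg _) (wt_le_one t)
  have hR : HRel F g := by
    intro z hz
    refine tendsto_nhds_unique (cau_lim hfi hFi hFt hz) ?_
    have := (cau_lim (fun n => wt_mul_int (poly_int (p n))) (wt_mul_int hg) wl hz).const_mul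
      (-(Real.pi : ℂ)⁻¹ * Sf z)
    exact this.congr fun n => (hfr n z hz).symm
  refine ⟨F, hFi, ?_, rel_pv hFi hg hR⟩
  have := rel_est hFi hg hR hMi le_rfl
  refine ⟨(Phi_meas.comp_aemeasurable
    hFi.aestronglyMeasurable.aemeasurable.norm).aestronglyMeasurable, ?_⟩
  rw [hasFiniteIntegral_iff_ofReal (Eventually.of_forall fun t => Phi_nonneg (abs_nonneg _))]
  exact this.trans_lt ENNReal.ofReal_lt_top

lemma trunc_int {f : ℝ → ℝ} (hf : Integrable f μI) (x : ℝ) {y : ℝ} (hy : 0 < y) :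
    Integrable (fun t => f t / (t - x))
      (volume.restrict {t : ℝ | t ∈ Set.Ioo (-1 : ℝ) 1 ∧ y ≤ |t - x|}) := by
  have h0 : Integrable f (volume.restrict {t : ℝ | t ∈ Set.Ioo (-1 : ℝ) 1 ∧ y ≤ |t - x|}) :=
    hf.mono_measure (Measure.restrict_mono_set _ fun t ht => ht.1)
  refine (h0.abs.const_mul y⁻¹).mono' (h0.aestronglyMeasurable.aemeasurable.div
    (by fun_prop)).aestronglyMeasurable ?_
  filter_upwards [ae_restrict_mem (trunc_meas x y)] with t ht
  rw [Real.norm_eq_abs, abs_div, div_eq_inv_mul]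
  have := ht.2
  gcongr

lemma pv_complex {f₁ f₂ : ℝ → ℝ} (h₁ : Integrable f₁ μI) (h₂ : Integrable f₂ μI) (x : ℝ) {y : ℝ}
    (hy : 0 < y) :
    ∫ t in {t : ℝ | t ∈ Set.Ioo (-1 : ℝ) 1 ∧ y ≤ |t - x|},
      ((f₁ t : ℂ) + f₂ t * Complex.I) / ((t : ℂ) - (x : ℂ)) =
      (PV f₁ y x : ℂ) + PV f₂ y x * Complex.I := by
  have i1 := trunc_int h₁ x hy
  have i2 := trunc_int h₂ x hy
  unfold PV
  rw [← integral_complex_ofReal, ← integral_complex_ofReal, ← integral_mul_const, ← integral_add i1.ofReal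
    (i2.ofReal.mul_const _)]
  congr 1; ext t; push_cast; ring

/-- `L(log L)²(-1,1)` is contained in the range of `T : L log L(-1,1) → L¹(-1,1)`. -/
theorem LlogL2_subset_range (g : ℝ → ℂ) (hg : MemLlogL2 g) :
    ∃ f : ℝ → ℂ, MemLlogL f ∧ FHT f =ᵐ[μI] g := by
  obtain ⟨hgm, hgi⟩ := hg
  have hgi' : Integrable (fun t => Ps ‖g t‖) μI := hgi
  have mre : AEStronglyMeasurable (fun t => (g t).re) μI :=
    Complex.continuous_re.comp_aestronglyMeasurable hgm
  have mim : AEStronglyMeasurable (fun t => (g t).im) μI :=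
    Complex.continuous_im.comp_aestronglyMeasurable hgm
  have ire : Integrable (fun t => Ps |(g t).re|) μI := by
    refine hgi'.mono' (Ps_meas.comp_aemeasurable mre.aemeasurable.norm).aestronglyMeasurable ?_
    filter_upwards with t
    rw [Real.norm_eq_abs, abs_of_nonneg (Ps_nonneg (abs_nonneg _))]
    exact Ps_mono (abs_nonneg _) (Complex.abs_re_le_norm _)
  have iim : Integrable (fun t => Ps |(g t).im|) μI := by
    refine hgi'.mono' (Ps_meas.comp_aemeasurable mim.aemeasurable.norm).aestronglyMeasurable ?_
    filter_upwards with t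
    rw [Real.norm_eq_abs, abs_of_nonneg (Ps_nonneg (abs_nonneg _))]
    exact Ps_mono (abs_nonneg _) (Complex.abs_im_le_norm _)
  obtain ⟨f₁, h₁, P₁, T₁⟩ := real_exists mre ire
  obtain ⟨f₂, h₂, P₂, T₂⟩ := real_exists mim iim
  have hfi : Integrable (fun t => (f₁ t : ℂ) + f₂ t * Complex.I) μI :=
    h₁.ofReal.add (h₂.ofReal.mul_const _)
  refine ⟨fun t => (f₁ t : ℂ) + f₂ t * Complex.I, ⟨hfi.aestronglyMeasurable, ?_⟩, ?_⟩
  · show Integrable (fun t => ‖(f₁ t : ℂ) + f₂ t * Complex.I‖ *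
      max (Real.log ‖(f₁ t : ℂ) + f₂ t * Complex.I‖) 0) μI
    have mm : Measurable fun s : ℝ => s * max (Real.log s) 0 := by fun_prop
    refine ((P₁.add P₂).const_mul 15).mono' (mm.comp_aemeasurable
      hfi.aestronglyMeasurable.aemeasurable.norm).aestronglyMeasurable ?_
    filter_upwards with t
    set s := ‖(f₁ t : ℂ) + f₂ t * Complex.I‖ with hs
    have hs0 : 0 ≤ s := norm_nonneg _
    have hs1 : s ≤ |f₁ t| + |f₂ t| + 0 := by
      rw [hs, add_zero]
      refine (norm_add_le _ _).trans ?_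
      simp
    rw [Real.norm_eq_abs, abs_of_nonneg (by positivity)]
    have a1 : s * max (Real.log s) 0 ≤ Phi s := by
      unfold Phi
      apply mul_le_mul_of_nonneg_left _ hs0
      have := log_half hs0
      apply max_le _ (by linarith)
      rcases hs0.eq_or_lt with h | h
      · have h' : Real.log s = 0 := by rw [← h, Real.log_zero]
        linarith
      · exact Real.log_le_log h (by linarith)
    have a2 := Phi_mono hs0 hs1
    have a3 := Phi_add3 (abs_nonneg (f₁ t)) (abs_nonneg (f₂ t)) le_rfl
    have a4 := Phi_3 (abs_nonneg (f₁ t))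
    have a5 := Phi_3 (abs_nonneg (f₂ t))
    have a6 : Phi (3 * 0) = 0 := by simp [Phi]
    simp only [Pi.add_apply]
    linarith
  · filter_upwards [T₁, T₂] with x hx₁ hx₂
    unfold FHT
    apply Tendsto.limUnder_eq
    have c1 := (Complex.continuous_ofReal.tendsto _).comp hx₁
    have c2 := ((Complex.continuous_ofReal.tendsto _).comp hx₂).mul_const Complex.I
    have c3 := (c1.add c2).const_mul (Real.pi : ℂ)⁻¹
    have e : (Real.pi : ℂ)⁻¹ * (((Real.pi * (g x).re : ℝ) : ℂ) +
        ((Real.pi * (g x).im : ℝ) : ℂ) * Complex.I) = g x := by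
      have : (Real.pi : ℂ) ≠ 0 := by exact_mod_cast Real.pi_ne_zero
      push_cast
      conv_rhs => rw [← Complex.re_add_im (g x)]
      field_simp
    rw [e] at c3
    refine c3.congr' ?_
    filter_upwards [self_mem_nhdsWithin] with y hy
    rw [pv_complex h₁ h₂ x hy]
    rfl
end
end

section
/- The range T(LlogL(-1,1)) of the finite Hilbert transform is not contained in LlogL(-1,1), and likewise the range T̂(LlogL(-1,1)) is not contained in LlogL(-1,1). -/
open MeasureTheory Set Filter

noncomputable section

def aC : ℝ := Real.exp (-1)
def phi (x : ℝ) : ℝ := -(x * (Real.log x) ^ 3)⁻¹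
def fC : ℝ → ℂ := (Set.Ioo 0 aC).indicator (fun x => ((phi x : ℝ) : ℂ))

lemma aC_pos : 0 < aC := Real.exp_pos _
lemma aC_lt : aC < 1 / 2 := by
  unfold aC
  rw [Real.exp_neg, inv_lt_comm₀ (Real.exp_pos _) (by norm_num)]
  have := Real.exp_one_gt_d9
  norm_num; linarith

lemma log_lt_of {x : ℝ} (hx : x ∈ Ioo 0 aC) : Real.log x < -1 :=
  (Real.log_lt_iff_lt_exp hx.1).2 hx.2

lemma phi_eq (x : ℝ) : phi x = (x * (-Real.log x) ^ 3)⁻¹ := by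
  unfold phi
  rw [← inv_neg]; congr 1; ring

lemma phi_pos {x : ℝ} (hx : x ∈ Ioo 0 aC) : 0 < phi x := by
  have := log_lt_of hx
  have h2 := hx.1
  have : 0 < -Real.log x := by linarith
  rw [phi_eq]; positivity

lemma cont_inv_log {b : ℝ} (hb : b ≤ aC) : ContinuousOn (fun x => (Real.log x)⁻¹) (Icc 0 b) := by
  intro x hx
  apply ContinuousAt.continuousWithinAt
  rcases eq_or_lt_of_le hx.1 with h | h
  · subst h
    rw [continuousAt_iff_punctured_nhds]
    simp only [Real.log_zero, inv_zero]
    exact tendsto_inv_atBot_zero.comp Real.tendsto_log_nhdsNE_zero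
  · have : x ≠ 1 := by have := hx.2; have := aC_lt; linarith
    have h3 : Real.log x ≠ 0 := by
      apply Real.log_ne_zero_of_pos_of_ne_one h this
    exact (Real.continuousAt_log h.ne').inv₀ h3

lemma meas_phi : Measurable phi := by
  unfold phi; fun_prop

lemma int_sq : IntegrableOn (fun x => (x * (Real.log x) ^ 2)⁻¹) (Ioo 0 aC) := by
  have := intervalIntegral.integrableOn_deriv_of_nonneg (a := 0) (b := aC)
    (g := fun x => -(Real.log x)⁻¹) (g' := fun x => (x * (Real.log x) ^ 2)⁻¹)
    (cont_inv_log le_rfl).neg ?_ ?_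
  · exact this.mono_set Ioo_subset_Ioc_self
  · intro x hx
    have h1 := log_lt_of hx
    have h2 := hx.1
    have h3 : Real.log x ≠ 0 := by linarith
    have := ((Real.hasDerivAt_log h2.ne').inv h3).neg
    refine this.congr_deriv ?_
    field_simp
  · intro x hx
    have h2 := hx.1
    positivity

lemma deriv_sq {x : ℝ} (hx : x ∈ Ioo 0 aC) :
    HasDerivAt (fun x => (1/2) * ((Real.log x)⁻¹) ^ 2) (phi x) x := by
  have h1 := log_lt_of hx
  have h2 := hx.1
  have h3 : Real.log x ≠ 0 := by linarith
  have := (((Real.hasDerivAt_log h2.ne').inv h3).pow 2).const_mul (1/2)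
  refine this.congr_deriv ?_
  unfold phi
  simp
  field_simp

lemma int_phi : IntegrableOn phi (Ioo 0 aC) := by
  have := intervalIntegral.integrableOn_deriv_of_nonneg (a := 0) (b := aC)
    (g := fun x => (1/2) * ((Real.log x)⁻¹) ^ 2) (g' := phi)
    (((cont_inv_log le_rfl).pow 2).const_mul _) (fun x hx => deriv_sq hx)
    (fun x hx => (phi_pos hx).le)
  exact this.mono_set Ioo_subset_Ioc_self

lemma integral_phi {t : ℝ} (ht : t ∈ Ioo 0 aC) :
    ∫ x in Ioo 0 t, phi x = (1/2) * ((Real.log t)⁻¹) ^ 2 := by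
  have := intervalIntegral.integral_eq_sub_of_hasDerivAt_of_le (a := 0) (b := t)
    (f := fun x => (1/2) * ((Real.log x)⁻¹) ^ 2) (f' := phi) ht.1.le
    (((cont_inv_log ht.2.le).pow 2).const_mul _)
    (fun x hx => deriv_sq ⟨hx.1, hx.2.trans ht.2⟩) ?_
  · rw [intervalIntegral.integral_of_le ht.1.le, integral_Ioc_eq_integral_Ioo] at this
    rw [this]; simp
  · rw [intervalIntegrable_iff_integrableOn_Ioo_of_le ht.1.le]
    exact int_phi.mono_set (Ioo_subset_Ioo_right ht.2.le)

lemma meas_fC : Measurable fC :=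
  (Complex.measurable_ofReal.comp meas_phi).indicator measurableSet_Ioo

lemma mem_fC : MemLlogL fC := by
  refine ⟨meas_fC.aestronglyMeasurable, ?_⟩
  have hm : Measurable (fun x => ‖fC x‖ * max (Real.log ‖fC x‖) 0) := by
    have := meas_fC
    fun_prop
  have hi : Integrable ((Ioo 0 aC).indicator (fun x => (x * (Real.log x) ^ 2)⁻¹)) :=
    int_sq.integrable_indicator measurableSet_Ioo
  refine (hi.mono' hm.aestronglyMeasurable (Eventually.of_forall fun x => ?_)).integrableOn
  by_cases hx : x ∈ Ioo 0 aC
  · have h1 := log_lt_of hx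
    have h2 := hx.1
    have hp := phi_pos hx
    have hn : ‖fC x‖ = phi x := by
      simp only [fC, indicator_of_mem hx, Complex.norm_real, Real.norm_eq_abs, abs_of_pos hp]
    rw [indicator_of_mem hx, hn, Real.norm_eq_abs, abs_of_nonneg (by positivity)]
    have hL : 0 < -Real.log x := by linarith
    have hlog : Real.log (phi x) ≤ - Real.log x := by
      rw [phi_eq, Real.log_inv, Real.log_mul h2.ne' (by positivity), Real.log_pow]
      have : 0 ≤ Real.log (-Real.log x) := Real.log_nonneg (by linarith)
      push_cast
      linarith
    calc phi x * max (Real.log (phi x)) 0 ≤ phi x * (- Real.log x) := by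
          gcongr; exact max_le hlog hL.le
      _ = _ := by
          unfold phi
          have : Real.log x ≠ 0 := by linarith
          field_simp
  · simp [fC, indicator_of_notMem hx]

lemma fht_lower (w : ℝ → ℝ) (hw : Measurable w)
    (hw1 : ∀ x ∈ Ioo 0 aC, 1 / 2 ≤ w x) (hw2 : ∀ x ∈ Ioo 0 aC, w x ≤ 1)
    {t : ℝ} (ht : t ∈ Ioo 0 aC) :
    (8 * Real.pi)⁻¹ * (t * (Real.log t) ^ 2)⁻¹ ≤ ‖FHT (fun x => (w x : ℂ) * fC x) (-t)‖ := by
  have h0 := ht.1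
  have hc := aC_lt
  have key : FHT (fun x => (w x : ℂ) * fC x) (-t)
      = (Real.pi : ℂ)⁻¹ * ((∫ x in Ioo 0 aC, w x * phi x / (x + t) : ℝ) : ℂ) := by
    unfold FHT
    apply Tendsto.limUnder_eq
    apply tendsto_const_nhds.congr'
    have : Ioo 0 t ∈ nhdsWithin (0:ℝ) (Ioi 0) := Ioo_mem_nhdsGT h0
    filter_upwards [this] with ε hε
    congr 1
    rw [← integral_complex_ofReal]
    have e : (fun x : ℝ => (w x : ℂ) * fC x / ((x : ℂ) - ((-t : ℝ) : ℂ)))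
        = (Ioo 0 aC).indicator (fun x : ℝ => ((w x * phi x / (x + t) : ℝ) : ℂ)) := by
      ext x
      by_cases hx : x ∈ Ioo 0 aC
      · simp only [fC, indicator_of_mem hx]; push_cast; ring
      · simp [fC, indicator_of_notMem hx]
    rw [e, setIntegral_indicator measurableSet_Ioo]
    congr 2
    ext x
    constructor
    · intro hx
      refine ⟨⟨⟨by linarith [hx.1], by linarith [hx.2]⟩, ?_⟩, hx⟩
      rw [abs_of_nonneg (by linarith [hx.1])]
      linarith [hx.1, hε.2]
    · exact fun hx => hx.2
  have hpt : ∀ x ∈ Ioo 0 aC, 0 ≤ w x * phi x / (x + t) := by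
    intro x hx
    have := hw1 x hx
    have := (phi_pos hx).le
    have := hx.1
    have : 0 ≤ w x := by linarith
    positivity
  have hint : IntegrableOn (fun x => w x * phi x / (x + t)) (Ioo 0 aC) := by
    have hm : Measurable (fun x => w x * phi x / (x + t)) := by
      have := meas_phi
      fun_prop
    refine Integrable.mono' (int_phi.const_mul t⁻¹) hm.aestronglyMeasurable ?_
    rw [ae_restrict_iff' measurableSet_Ioo]
    refine Eventually.of_forall fun x hx => ?_
    rw [Real.norm_eq_abs, abs_of_nonneg (hpt x hx), div_eq_inv_mul]
    have := hw2 x hx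
    have := (phi_pos hx).le
    have := hx.1
    have h5 : w x * phi x ≤ phi x := by nlinarith
    have := hw1 x hx
    have : 0 ≤ w x := by linarith
    gcongr
    linarith
  have hlow : (8 * (t * (Real.log t) ^ 2))⁻¹ ≤ ∫ x in Ioo 0 aC, w x * phi x / (x + t) := by
    have hsub : Ioo 0 t ⊆ Ioo 0 aC := Ioo_subset_Ioo_right ht.2.le
    calc (8 * (t * (Real.log t) ^ 2))⁻¹ = ∫ x in Ioo 0 t, (4 * t)⁻¹ * phi x := by
          rw [integral_const_mul, integral_phi ht]
          have : Real.log t ≠ 0 := by linarith [log_lt_of ht]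
          field_simp
          norm_num
      _ ≤ ∫ x in Ioo 0 t, w x * phi x / (x + t) := by
          apply setIntegral_mono_on ((int_phi.mono_set hsub).const_mul _) (hint.mono_set hsub)
            measurableSet_Ioo
          intro x hx
          have h1 := hw1 x (hsub hx)
          have h2 := (phi_pos (hsub hx)).le
          have h3 := hx.1
          rw [inv_mul_eq_div, div_le_div_iff₀ (by positivity) (by positivity)]
          have : (1/2) * phi x ≤ w x * phi x := by gcongr
          calc phi x * (x + t) ≤ phi x * (2 * t) := by gcongr; linarith [hx.2]
            _ = ((1/2) * phi x) * (4 * t) := by ring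
            _ ≤ _ := by gcongr
      _ ≤ _ := by
          apply setIntegral_mono_set hint
          · rw [EventuallyLE, ae_restrict_iff' measurableSet_Ioo]
            exact Eventually.of_forall hpt
          · exact hsub.eventuallyLE
  rw [key, norm_mul, norm_inv, Complex.norm_real, Complex.norm_real, Real.norm_eq_abs,
    Real.norm_eq_abs, abs_of_pos Real.pi_pos]
  calc _ = Real.pi⁻¹ * (8 * (t * (Real.log t) ^ 2))⁻¹ := by
        simp only [mul_inv]; ring
    _ ≤ _ := by
      gcongr
      exact hlow.trans (le_abs_self _)

lemma not_mem (F : ℝ → ℂ) (K : ℝ) (hK : 0 < K)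
    (h : ∀ t ∈ Ioo 0 aC, K * (t * (Real.log t) ^ 2)⁻¹ ≤ ‖F (-t)‖) : ¬ MemLlogL F := by
  intro hF
  have hl := Real.tendsto_log_nhdsLT_zero
  refine not_integrableOn_of_tendsto_norm_atTop_of_deriv_isBigO_filter
    (f := fun s => Real.log (Real.log s)) (nhdsWithin (0:ℝ) (Iio 0)) (k := Ioo (-1) 1)
    ?_ ?_ ?_ ?_ hF.2
  · exact mem_nhdsWithin_of_mem_nhds (Ioo_mem_nhds (by norm_num) (by norm_num))
  · filter_upwards [hl.eventually_lt_atBot 0, self_mem_nhdsWithin] with s hs hs0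
    exact (Real.differentiableAt_log (ne_of_lt hs0)).log hs.ne
  · have h1 : Tendsto (fun s => Real.log (-Real.log s)) (nhdsWithin (0:ℝ) (Iio 0)) atTop :=
      Real.tendsto_log_atTop.comp (tendsto_neg_atBot_atTop.comp hl)
    simp only [Real.log_neg_eq_log] at h1
    exact tendsto_norm_atTop_atTop.comp h1
  · apply Asymptotics.IsBigO.of_bound (2 / K)
    have hexp : ∀ᶠ s in nhdsWithin (0:ℝ) (Iio 0),
        4 / K ≤ Real.exp (-Real.log s / 2) / (-Real.log s / 2) ^ 2 / 1 := by
      have h2 : Tendsto (fun s => -Real.log s / 2) (nhdsWithin (0:ℝ) (Iio 0)) atTop :=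
        (tendsto_neg_atBot_atTop.comp hl).atTop_div_const (by norm_num)
      have := ((Real.tendsto_exp_div_pow_atTop 2).comp h2).eventually_ge_atTop (4 / K)
      simpa using this
    have hmem : Ioo (-aC) 0 ∈ nhdsWithin (0:ℝ) (Iio 0) :=
      Ioo_mem_nhdsLT (by linarith [aC_pos])
    filter_upwards [hexp, hmem] with s hs hs0
    have ht : -s ∈ Ioo 0 aC := ⟨by linarith [hs0.2], by linarith [hs0.1]⟩
    obtain ⟨t, rfl⟩ : ∃ t, s = -t := ⟨-s, by ring⟩
    rw [neg_neg] at ht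
    simp only [Real.log_neg_eq_log, div_one] at hs
    have hlt := log_lt_of ht
    have ht0 := ht.1
    have hFt := h t ht
    obtain ⟨L, hL⟩ : ∃ L, L = -Real.log t := ⟨_, rfl⟩
    have hlog : Real.log t = -L := by linarith
    have hL1 : 1 < L := by linarith
    have hte : t = Real.exp (-L) := by rw [← hlog, Real.exp_log ht0]
    have hder : deriv (fun s => Real.log (Real.log s)) (-t) = (t * L)⁻¹ := by
      have h1 : Real.log (-t) ≠ 0 := by rw [Real.log_neg_eq_log]; linarith
      rw [((Real.hasDerivAt_log (by linarith : -t ≠ 0)).log h1).deriv, Real.log_neg_eq_log, hlog]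
      rw [inv_neg, neg_div_neg_eq, mul_inv, div_eq_mul_inv]
    rw [hder, Real.norm_eq_abs, abs_of_pos (by positivity)]
    rw [hlog] at hs hFt
    simp only [neg_neg, even_two, Even.neg_pow] at hs hFt
    set N := ‖F (-t)‖ with hN
    have hNe : Real.exp (L / 2) ≤ N := by
      refine le_trans ?_ hFt
      rw [div_le_div_iff₀ hK (by positivity)] at hs
      rw [← div_eq_mul_inv, le_div_iff₀ (by positivity), hte]
      have e : Real.exp (-L) = (Real.exp (L/2))⁻¹ * (Real.exp (L/2))⁻¹ := by
        rw [← Real.exp_neg, ← Real.exp_add]; congr 1; ring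
      rw [e]
      have := Real.exp_pos (L/2)
      field_simp
      nlinarith
    have hNpos : 0 < N := (Real.exp_pos _).trans_le hNe
    have hlN : L / 2 ≤ Real.log N := (Real.le_log_iff_exp_le hNpos).2 hNe
    rw [Real.norm_eq_abs]
    refine le_trans ?_ (mul_le_mul_of_nonneg_left (le_abs_self _) (by positivity))
    calc (t * L)⁻¹ = 2 / K * ((K * (t * L ^ 2)⁻¹) * (L / 2)) := by field_simp
      _ ≤ _ := by
        gcongr
        exact hlN.trans (le_max_left _ _)

/-- Neither the range `T(L log L)` nor the range `T̂(L log L)` is contained in `L log L`. -/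
theorem ranges_not_contained_in_LlogL :
    (∃ f : ℝ → ℂ, MemLlogL f ∧ ¬ MemLlogL (FHT f)) ∧
    (∃ f : ℝ → ℂ, MemLlogL f ∧ ¬ MemLlogL (hatT f)) := by
  refine ⟨⟨fC, mem_fC, ?_⟩, ⟨fC, mem_fC, ?_⟩⟩
  · refine not_mem _ (8 * Real.pi)⁻¹ (by positivity) fun t ht => ?_
    have := fht_lower (fun _ => 1) measurable_const (by intros; norm_num) (by intros; norm_num) ht
    simpa using this
  · refine not_mem _ (8 * Real.pi)⁻¹ (by positivity) fun t ht => ?_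
    have hb := aC_lt
    have := fht_lower (fun x => Real.sqrt (1 - x ^ 2)) (by fun_prop)
      (by
        intro x hx
        apply Real.le_sqrt_of_sq_le
        nlinarith [hx.1, hx.2])
      (by
        intro x hx
        apply (Real.sqrt_le_left zero_le_one).2
        nlinarith [hx.1, hx.2]) ht
    refine this.trans ?_
    unfold hatT
    rw [norm_mul, norm_neg, norm_inv, Complex.norm_real, Real.norm_eq_abs,
      abs_of_nonneg (Real.sqrt_nonneg _)]
    apply le_mul_of_one_le_left (norm_nonneg _)
    apply (one_le_inv₀ _).2
    · apply (Real.sqrt_le_left zero_le_one).2; nlinarith [ht.1]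
    · apply Real.sqrt_pos.2; nlinarith [ht.1, ht.2]
end
end
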